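/- (Brady–Watt) Let W be a finite Coxeter group equipped with the reflection order and let γ be a Coxeter element. Then the interval [1,γ] = {w ∈ W : w ≤ γ} is a lattice: every pair of elements of [1,γ] has a greatest lower bound and a least upper bound within ([1,γ], ≤). -/

import Mathlib

/-!
The idea is that below `γ` the absolute order is inclusion of moved spaces `mov w = range (1 - w)`,
and that the roots of `mov u ∩ mov w` span the moved space of an element below `γ`.

`W` acts faithfully on `ℝ^B` by the geometric representation (`rep`), in which every root has
coordinates of one sign (`rep_nonneg`, `rep_nonpos`); averaging gives an invariant inner product
`ip`, and every nontrivial element has a root in its moved space (`exists_root_in_mov`). All this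
is packaged as a `ReflRep` (`geom`). Carter's lemma `rlen_eq_finrank` then says that reflection
length is the dimension of the moved space.

For a Coxeter element `γ = s₁ ⋯ sₙ` the map `1 - γ` is invertible, and the bilinear form
`E x y = ⟨(1 - γ)⁻¹ x, y⟩` satisfies `E x y + E y x = ⟨x, y⟩` and the Serre-type duality
`E (γ x) y = -E y x`. Following each positive root along its backward `γ`-orbit until it reaches
one of the inversions `s₁ ⋯ sₖ₋₁ εₖ` of `γ⁻¹` yields a total order on the positive roots such that
`E x y ≥ 0` and `E y x ≤ 0` whenever `x` precedes `y` (`exists_coxData`). The form and the order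
are recorded in `CoxData`.

Fix `w ≤ γ`. Nonnegative combinations of positive roots of `mov w` are dominant
(`CoxData.Dom`, `CoxData.dom_of_pos`), and a dominant vector is a strictly positive combination of
a decreasing list of positive roots `ρ₁, …, ρₖ` of `mov w` with `E ρᵢ ρⱼ = 0` for `i < j`
(`CoxData.exists_dec`). Such a list depends on the vector only, not on `w`
(`CoxData.Good.unique`). Hence a generic positive combination of the positive roots of
`mov u ∩ mov w` decomposes along roots common to `u` and `w`, and the product of the corresponding
reflections is an element below `γ` whose moved space contains every common root
(`CoxData.exists_inf`). This element is the meet, and joins follow from meets because `γ` is an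
upper bound of everything. The case of an arbitrary Coxeter element follows by conjugation.
-/

variable {B : Type*} {W : Type*} [Group W] {M : CoxeterMatrix B}

/-- The reflection length of `w`: the least `k` such that `w` is a product of `k`
reflections (conjugates of simple reflections). -/
noncomputable def rlen (cs : CoxeterSystem M W) (w : W) : ℕ :=
  sInf {k | ∃ l : List W, (∀ t ∈ l, cs.IsReflection t) ∧ l.length = k ∧ l.prod = w}

/-- The reflection (absolute) order on `W`: `u ≤ w` iff `ℓ(w) = ℓ(u) + ℓ(u⁻¹w)`. -/
def rle (cs : CoxeterSystem M W) (u w : W) : Prop :=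
  rlen cs w = rlen cs u + rlen cs (u⁻¹ * w)

/-- A Coxeter element: a conjugate of a product of all the simple reflections,
each occurring exactly once, in some order. -/
def IsCoxeterElement [Fintype B] (cs : CoxeterSystem M W) (γ : W) : Prop :=
  ∃ (v : W) (l : List B), l.Nodup ∧ (∀ i : B, i ∈ l) ∧ γ = v * cs.wordProd l * v⁻¹

/-- `p` is a least upper bound of the set `s` within the interval `[1,γ]`
under the reflection order. -/
def IsIntervalLUB (cs : CoxeterSystem M W) (γ : W) (s : Set W) (p : W) : Prop :=
  rle cs p γ ∧ (∀ x ∈ s, rle cs x p) ∧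
    ∀ r, rle cs r γ → (∀ x ∈ s, rle cs x r) → rle cs p r

/-- `p` is a greatest lower bound of the set `s` within the interval `[1,γ]`
under the reflection order. -/
def IsIntervalGLB (cs : CoxeterSystem M W) (γ : W) (s : Set W) (p : W) : Prop :=
  rle cs p γ ∧ (∀ x ∈ s, rle cs p x) ∧
    ∀ r, rle cs r γ → (∀ x ∈ s, rle cs r x) → rle cs r p

namespace BradyWatt

/-! ### Reflection length -/

section ReflectionLength

variable (cs : CoxeterSystem M W)

lemma rlen_le_length {l : List W} (hl : ∀ t ∈ l, cs.IsReflection t) :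
    rlen cs l.prod ≤ l.length :=
  Nat.sInf_le ⟨l, hl, rfl, rfl⟩

lemma exists_list_rlen (w : W) :
    ∃ l : List W, (∀ t ∈ l, cs.IsReflection t) ∧ l.length = rlen cs w ∧ l.prod = w := by
  have hne : {k | ∃ l : List W, (∀ t ∈ l, cs.IsReflection t) ∧ l.length = k ∧
      l.prod = w}.Nonempty := by
    obtain ⟨ω, rfl⟩ := cs.wordProd_surjective w
    refine ⟨_, ω.map cs.simple, ?_, rfl, rfl⟩
    intro t ht
    obtain ⟨i, -, rfl⟩ := List.mem_map.1 ht
    exact cs.isReflection_simple i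
  exact Nat.sInf_mem hne

lemma rlen_one : rlen cs 1 = 0 := by
  simpa using rlen_le_length cs (l := []) (by simp)

lemma rlen_reflection_le {t : W} (ht : cs.IsReflection t) : rlen cs t ≤ 1 := by
  simpa using rlen_le_length cs (l := [t]) (by simpa using ht)

lemma rlen_mul_le (u v : W) : rlen cs (u * v) ≤ rlen cs u + rlen cs v := by
  obtain ⟨l, hl, hl', rfl⟩ := exists_list_rlen cs u
  obtain ⟨m, hm, hm', rfl⟩ := exists_list_rlen cs v
  rw [← hl', ← hm', ← List.prod_append, ← List.length_append]
  apply rlen_le_length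
  simp only [List.mem_append]
  rintro t (h | h)
  exacts [hl t h, hm t h]

lemma rlen_conj_le (v w : W) : rlen cs (v * w * v⁻¹) ≤ rlen cs w := by
  obtain ⟨l, hl, hl', rfl⟩ := exists_list_rlen cs w
  have h : v * l.prod * v⁻¹ = (l.map (MulAut.conj v)).prod := by
    rw [← map_list_prod]; simp
  rw [h, ← hl']
  refine (rlen_le_length cs ?_).trans (by simp)
  intro t ht
  obtain ⟨s, hs, rfl⟩ := List.mem_map.1 ht
  exact (hl s hs).conj v

lemma rlen_conj (v w : W) : rlen cs (v * w * v⁻¹) = rlen cs w := by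
  refine le_antisymm (rlen_conj_le cs v w) ?_
  simpa [mul_assoc] using rlen_conj_le cs v⁻¹ (v * w * v⁻¹)

lemma rle_conj (v u w : W) :
    rle cs (v * u * v⁻¹) (v * w * v⁻¹) ↔ rle cs u w := by
  have h : (v * u * v⁻¹)⁻¹ * (v * w * v⁻¹) = v * (u⁻¹ * w) * v⁻¹ := by group
  simp only [rle, h, rlen_conj]

lemma exists_rlen_mul_lt {v : W} (hv : v ≠ 1) :
    ∃ t, cs.IsReflection t ∧ rlen cs (t * v) + 1 = rlen cs v := by
  obtain ⟨l, hl, hl', rfl⟩ := exists_list_rlen cs v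
  cases l with
  | nil => simp at hv
  | cons t l =>
    have ht : cs.IsReflection t := hl t (by simp)
    refine ⟨t, ht, ?_⟩
    have h1 : t * (t :: l).prod = l.prod := by
      rw [List.prod_cons, ← mul_assoc, ht.mul_self, one_mul]
    have h2 : rlen cs l.prod ≤ l.length := rlen_le_length cs (fun s hs => hl s (by simp [hs]))
    have h3 := rlen_mul_le cs t l.prod
    have h4 := rlen_reflection_le cs ht
    rw [List.length_cons] at hl'
    rw [h1]
    rw [List.prod_cons] at hl' ⊢
    omega

lemma rle_refl (w : W) : rle cs w w := by simp [rle, rlen_one]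

end ReflectionLength

/-! ### Orthogonal reflection representations -/

/-- A finite orthogonal reflection representation of the Coxeter group `W` on the real vector
space `V`, together with its finite set `Φ` of unit roots. The roots are split into positive and
negative ones by the sign of the linear functional `ht`. The field `exists_root_mem` says that
every nontrivial `w` has a root in its moved space `range (1 - w)`. -/
structure ReflRep (cs : CoxeterSystem M W) (V : Type*) [AddCommGroup V] [Module ℝ V] where
  /-- The action of `W`. -/
  act : W →* Module.End ℝ V
  /-- The invariant inner product. -/
  Q : V →ₗ[ℝ] V →ₗ[ℝ] ℝ
  Q_symm : ∀ x y, Q x y = Q y x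
  Q_pos : ∀ x, x ≠ 0 → 0 < Q x x
  Q_act : ∀ w x y, Q (act w x) (act w y) = Q x y
  /-- The set of unit roots. -/
  Φ : Set V
  finite_Φ : Φ.Finite
  /-- The functional whose sign separates positive from negative roots. -/
  ht : V →ₗ[ℝ] ℝ
  ht_ne : ∀ x ∈ Φ, ht x ≠ 0
  Q_self : ∀ x ∈ Φ, Q x x = 1
  act_mem : ∀ w, ∀ x ∈ Φ, act w x ∈ Φ
  neg_mem : ∀ x ∈ Φ, -x ∈ Φ
  /-- The reflection attached to a root. -/
  refl : V → W
  refl_isReflection : ∀ x ∈ Φ, cs.IsReflection (refl x)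
  refl_act : ∀ x ∈ Φ, ∀ v, act (refl x) v = v - (2 * Q v x) • x
  exists_root : ∀ t, cs.IsReflection t → ∃ x ∈ Φ, refl x = t
  exists_root_mem : ∀ w, w ≠ 1 → ∃ x ∈ Φ, ∃ z, z - act w z = x

namespace ReflRep

variable {cs : CoxeterSystem M W} {V : Type*} [AddCommGroup V] [Module ℝ V]
  (G : ReflRep cs V)

/-- The moved space `range (1 - w)`. -/
def mov (w : W) : Submodule ℝ V := LinearMap.range (1 - G.act w)

lemma mem_mov {w : W} {x : V} : x ∈ G.mov w ↔ ∃ z, z - G.act w z = x := by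
  simp [mov, LinearMap.mem_range]

lemma sub_mem_mov (w : W) (z : V) : z - G.act w z ∈ G.mov w := G.mem_mov.2 ⟨z, rfl⟩

lemma act_mul (u v : W) (x : V) : G.act (u * v) x = G.act u (G.act v x) := by
  rw [map_mul]; rfl

lemma act_one (x : V) : G.act 1 x = x := by rw [map_one]; rfl

lemma act_inv_act (u : W) (x : V) : G.act u⁻¹ (G.act u x) = x := by
  rw [← act_mul, inv_mul_cancel, act_one]

lemma act_act_inv (u : W) (x : V) : G.act u (G.act u⁻¹ x) = x := by
  rw [← act_mul, mul_inv_cancel, act_one]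

lemma Q_act_left (w : W) (x y : V) : G.Q (G.act w x) y = G.Q x (G.act w⁻¹ y) := by
  rw [← G.Q_act w x, act_act_inv]

lemma mov_one : G.mov 1 = ⊥ := by
  rw [eq_bot_iff]
  intro x hx
  obtain ⟨z, rfl⟩ := G.mem_mov.1 hx
  simp

lemma act_mem_mov {w : W} {x : V} (hx : x ∈ G.mov w) : G.act w x ∈ G.mov w := by
  obtain ⟨z, rfl⟩ := G.mem_mov.1 hx
  exact G.mem_mov.2 ⟨G.act w z, by simp⟩

lemma act_inv_mem_mov {w : W} {x : V} (hx : x ∈ G.mov w) : G.act w⁻¹ x ∈ G.mov w := by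
  obtain ⟨z, rfl⟩ := G.mem_mov.1 hx
  exact G.mem_mov.2 ⟨G.act w⁻¹ z, by simp⟩

lemma ne_zero {x : V} (hx : x ∈ G.Φ) : x ≠ 0 := by
  rintro rfl
  simpa using G.Q_self _ hx

lemma refl_mul_self {x : V} (hx : x ∈ G.Φ) : G.refl x * G.refl x = 1 :=
  (G.refl_isReflection x hx).mul_self

lemma refl_mul_cancel {x : V} (hx : x ∈ G.Φ) (w : W) : G.refl x * (G.refl x * w) = w := by
  rw [← mul_assoc, G.refl_mul_self hx, one_mul]

/-- Multiplying by the reflection in `x` enlarges the moved space at most by the line of `x`. -/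
lemma mov_refl_mul_le {x : V} (hx : x ∈ G.Φ) (w : W) :
    G.mov (G.refl x * w) ≤ G.mov w ⊔ Submodule.span ℝ {x} := by
  intro y hy
  obtain ⟨z, rfl⟩ := G.mem_mov.1 hy
  rw [act_mul, G.refl_act x hx]
  have h : z - (G.act w z - (2 * G.Q (G.act w z) x) • x)
      = (z - G.act w z) + (2 * G.Q (G.act w z) x) • x := by abel
  rw [h]
  exact add_mem (Submodule.mem_sup_left (G.sub_mem_mov w z))
    (Submodule.mem_sup_right (Submodule.smul_mem _ _ (Submodule.mem_span_singleton_self x)))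

lemma mov_refl_mul_le_of_mem {x : V} (hx : x ∈ G.Φ) {w : W} (hxw : x ∈ G.mov w) :
    G.mov (G.refl x * w) ≤ G.mov w :=
  (G.mov_refl_mul_le hx w).trans (sup_le le_rfl (by simpa using hxw))

/-- The vectors `z` and `w z = z - x` have the same length, which makes `z` fixed by
`refl x * w`. -/
lemma two_mul_Q_of_sub_eq {x z : V} (hx : x ∈ G.Φ) {w : W} (hz : z - G.act w z = x) :
    2 * G.Q z x = 1 := by
  have h1 : G.act w z = z - x := by rw [← hz]; abel
  have h2 := G.Q_act w z z
  rw [h1] at h2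
  simp only [map_sub, LinearMap.sub_apply] at h2
  rw [G.Q_symm x z, G.Q_self x hx] at h2
  linarith

lemma refl_mul_fix {x z : V} (hx : x ∈ G.Φ) {w : W} (hz : z - G.act w z = x) :
    G.act (G.refl x * w) z = z := by
  have h0 := G.two_mul_Q_of_sub_eq hx hz
  have h1 : G.act w z = z - x := by rw [← hz]; abel
  rw [act_mul, G.refl_act x hx, h1]
  simp only [map_sub, LinearMap.sub_apply, G.Q_self x hx]
  have : 2 * (G.Q z x - 1) = -1 := by linarith
  rw [this]
  simp

/-- Moved space and fixed space are orthogonal. -/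
lemma Q_fix_mov {w : W} {z y : V} (hz : G.act w z = z) (hy : y ∈ G.mov w) : G.Q z y = 0 := by
  obtain ⟨v, rfl⟩ := G.mem_mov.1 hy
  rw [map_sub, ← G.Q_act w z v, hz, sub_self]

lemma notMem_mov_refl_mul {x : V} (hx : x ∈ G.Φ) {w : W} (hxw : x ∈ G.mov w) :
    x ∉ G.mov (G.refl x * w) := by
  intro h
  obtain ⟨z, hz⟩ := G.mem_mov.1 hxw
  have h1 := G.Q_fix_mov (G.refl_mul_fix hx hz) h
  have h2 := G.two_mul_Q_of_sub_eq hx hz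
  rw [h1] at h2
  norm_num at h2

lemma mov_mul_le (u v : W) : G.mov (u * v) ≤ G.mov u ⊔ G.mov v := by
  intro y hy
  obtain ⟨z, rfl⟩ := G.mem_mov.1 hy
  have h : z - G.act (u * v) z = (G.act v z - G.act u (G.act v z)) + (z - G.act v z) := by
    rw [act_mul]; abel
  rw [h]
  exact add_mem (Submodule.mem_sup_left (G.sub_mem_mov _ _))
    (Submodule.mem_sup_right (G.sub_mem_mov _ _))

variable [FiniteDimensional ℝ V]

lemma finrank_sup_span_le (p : Submodule ℝ V) (x : V) :
    Module.finrank ℝ ↥(p ⊔ Submodule.span ℝ {x}) ≤ Module.finrank ℝ p + 1 := by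
  refine (Submodule.finrank_add_le_finrank_add_finrank p _).trans ?_
  have := finrank_span_le_card (R := ℝ) ({x} : Set V)
  simp at this
  omega

lemma finrank_mov_list_le (l : List W) (hl : ∀ t ∈ l, cs.IsReflection t) :
    Module.finrank ℝ (G.mov l.prod) ≤ l.length := by
  induction l with
  | nil => rw [List.prod_nil, mov_one]; simp
  | cons t l ih =>
    obtain ⟨x, hx, rfl⟩ := G.exists_root t (hl t (by simp))
    rw [List.prod_cons, List.length_cons]
    have h1 := Submodule.finrank_mono (G.mov_refl_mul_le hx l.prod)
    have h2 := finrank_sup_span_le (G.mov l.prod) x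
    have h3 := ih (fun s hs => hl s (by simp [hs]))
    omega

lemma rlen_le_finrank (n : ℕ) : ∀ w, Module.finrank ℝ (G.mov w) = n → rlen cs w ≤ n := by
  induction n using Nat.strong_induction_on with
  | _ n ih =>
    intro w hw
    by_cases h1 : w = 1
    · subst h1; rw [rlen_one]; exact Nat.zero_le _
    obtain ⟨x, hx, hxw⟩ := G.exists_root_mem w h1
    have hxw : x ∈ G.mov w := G.mem_mov.2 hxw
    have hlt : G.mov (G.refl x * w) < G.mov w :=
      lt_of_le_of_ne (G.mov_refl_mul_le_of_mem hx hxw)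
        (fun h => G.notMem_mov_refl_mul hx hxw (h ▸ hxw))
    have h2 := Submodule.finrank_lt_finrank_of_lt hlt
    rw [hw] at h2
    have h3 := ih _ h2 _ rfl
    have h4 := rlen_mul_le cs (G.refl x) (G.refl x * w)
    rw [G.refl_mul_cancel hx] at h4
    have h5 := rlen_reflection_le cs (G.refl_isReflection x hx)
    omega

/-- Carter's lemma: reflection length is the dimension of the moved space. -/
lemma rlen_eq_finrank (w : W) : rlen cs w = Module.finrank ℝ (G.mov w) := by
  refine le_antisymm (G.rlen_le_finrank _ w rfl) ?_
  obtain ⟨l, hl, hl', rfl⟩ := exists_list_rlen cs w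
  rw [← hl']
  exact G.finrank_mov_list_le l hl

lemma rlen_refl_mul {x : V} (hx : x ∈ G.Φ) {w : W} (hxw : x ∈ G.mov w) :
    rlen cs (G.refl x * w) + 1 = rlen cs w := by
  have hlt : G.mov (G.refl x * w) < G.mov w :=
    lt_of_le_of_ne (G.mov_refl_mul_le_of_mem hx hxw)
      (fun h => G.notMem_mov_refl_mul hx hxw (h ▸ hxw))
  have h2 := Submodule.finrank_lt_finrank_of_lt hlt
  rw [← rlen_eq_finrank, ← rlen_eq_finrank] at h2
  have h4 := rlen_mul_le cs (G.refl x) (G.refl x * w)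
  rw [G.refl_mul_cancel hx] at h4
  have h5 := rlen_reflection_le cs (G.refl_isReflection x hx)
  omega

lemma mem_mov_of_rlen {x : V} (hx : x ∈ G.Φ) {w : W}
    (h : rlen cs (G.refl x * w) + 1 = rlen cs w) : x ∈ G.mov w := by
  have h1 := G.mov_refl_mul_le hx (G.refl x * w)
  rw [G.refl_mul_cancel hx] at h1
  have h2 : G.mov w = G.mov (G.refl x * w) ⊔ Submodule.span ℝ {x} := by
    apply Submodule.eq_of_le_of_finrank_le h1
    have := finrank_sup_span_le (G.mov (G.refl x * w)) x
    rw [← G.rlen_eq_finrank w, ← h]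
    rwa [← G.rlen_eq_finrank] at this
  rw [h2]
  exact Submodule.mem_sup_right (Submodule.mem_span_singleton_self x)

lemma mov_le_of_rle {u w : W} (h : rle cs u w) : G.mov u ≤ G.mov w := by
  have h1 := G.mov_mul_le u (u⁻¹ * w)
  rw [mul_inv_cancel_left] at h1
  have h2 : G.mov w = G.mov u ⊔ G.mov (u⁻¹ * w) := by
    apply Submodule.eq_of_le_of_finrank_le h1
    refine (Submodule.finrank_add_le_finrank_add_finrank _ _).trans ?_
    rw [← G.rlen_eq_finrank, ← G.rlen_eq_finrank, ← G.rlen_eq_finrank, ← h]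
  rw [h2]
  exact le_sup_left

/-- Moved spaces are spanned by roots. -/
lemma mov_le_span (w : W) : G.mov w ≤ Submodule.span ℝ {x | x ∈ G.Φ ∧ x ∈ G.mov w} := by
  induction hn : rlen cs w using Nat.strong_induction_on generalizing w with
  | _ n ih =>
    by_cases h1 : w = 1
    · subst h1; rw [mov_one]; exact bot_le
    obtain ⟨x, hx, hxw⟩ := G.exists_root_mem w h1
    have hxw : x ∈ G.mov w := G.mem_mov.2 hxw
    have h2 := G.rlen_refl_mul hx hxw
    have h3 := ih _ (by omega) (G.refl x * w) rfl
    have h4 := G.mov_refl_mul_le hx (G.refl x * w)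
    rw [G.refl_mul_cancel hx] at h4
    refine h4.trans (sup_le (h3.trans (Submodule.span_mono ?_)) ?_)
    · exact fun y hy => ⟨hy.1, G.mov_refl_mul_le_of_mem hx hxw hy.2⟩
    · rw [Submodule.span_singleton_le_iff_mem]
      exact Submodule.subset_span ⟨hx, hxw⟩

/-- Going down the absolute order by left multiplication by a root in the moved space. -/
lemma rle_refl_mul {γ w : W} (hw : rle cs w γ) {x : V} (hx : x ∈ G.Φ) (hxw : x ∈ G.mov w) :
    rle cs (G.refl x * w) γ := by
  have h1 := G.rlen_refl_mul hx hxw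
  have h2 : (G.refl x * w)⁻¹ * γ = (w⁻¹ * G.refl x * w) * (w⁻¹ * γ) := by
    rw [mul_inv_rev, (G.refl_isReflection x hx).inv]; group
  have h3 : cs.IsReflection (w⁻¹ * G.refl x * w) := by
    simpa using (G.refl_isReflection x hx).conj w⁻¹
  have h4 := rlen_mul_le cs (w⁻¹ * G.refl x * w) (w⁻¹ * γ)
  have h5 := rlen_reflection_le cs h3
  have h6 := rlen_mul_le cs (G.refl x * w) ((G.refl x * w)⁻¹ * γ)
  rw [mul_inv_cancel_left] at h6
  rw [← h2] at h4
  unfold rle at hw ⊢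
  omega

/-- Below `γ`, an element other than `γ` is covered by some element below `γ`, obtained by
left multiplication by a reflection. -/
lemma exists_cover {γ w : W} (hw : rle cs w γ) (hne : w ≠ γ) :
    ∃ x ∈ G.Φ, ∃ w₁, rle cs w₁ γ ∧ x ∈ G.mov w₁ ∧ w = G.refl x * w₁ := by
  have hv : w⁻¹ * γ ≠ 1 := fun h => hne (by rw [inv_mul_eq_one] at h; exact h)
  obtain ⟨t, ht, hlen⟩ := exists_rlen_mul_lt cs hv
  obtain ⟨x, hx, hxt⟩ := G.exists_root (w * t * w⁻¹) (ht.conj w)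
  have e1 : w = G.refl x * (w * t) := by
    rw [hxt]
    have := ht.mul_self
    calc w = w * (t * t) := by rw [this, mul_one]
      _ = _ := by group
  have h3 := rlen_mul_le cs w t
  have h4 := rlen_reflection_le cs ht
  have h5 := rlen_mul_le cs (w * t) (t * (w⁻¹ * γ))
  have e2 : w * t * (t * (w⁻¹ * γ)) = γ := by
    calc w * t * (t * (w⁻¹ * γ)) = w * (t * t) * (w⁻¹ * γ) := by group
      _ = γ := by rw [ht.mul_self]; group
  have e3 : (w * t)⁻¹ * γ = t * (w⁻¹ * γ) := by
    rw [mul_inv_rev, ht.inv]; group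
  rw [e2] at h5
  unfold rle at hw
  refine ⟨x, hx, w * t, ?_, ?_, e1⟩
  · unfold rle; rw [e3]; omega
  · apply G.mem_mov_of_rlen hx
    rw [← e1]; omega

end ReflRep

/-! ### The bilinear form and the root order attached to a Coxeter element -/

/-- A root `x` is positive when `ht x > 0`. -/
def ReflRep.Pos {cs : CoxeterSystem M W} {V : Type*} [AddCommGroup V] [Module ℝ V]
    (G : ReflRep cs V) (x : V) : Prop := x ∈ G.Φ ∧ 0 < G.ht x

/-- The structure on a reflection representation coming from a Coxeter element `γ`: the bilinear
form `E x y = ⟨(1 - γ)⁻¹ x, y⟩`, and an injective numbering `key` of the positive roots such that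
`E x y ≥ 0` and `E y x ≤ 0` whenever `x` precedes `y`. -/
structure CoxData {cs : CoxeterSystem M W} {V : Type*} [AddCommGroup V] [Module ℝ V]
    (G : ReflRep cs V) (γ : W) where
  /-- The form `⟨(1 - γ)⁻¹ x, y⟩`. -/
  E : V →ₗ[ℝ] V →ₗ[ℝ] ℝ
  E_sub : ∀ z y, E (z - G.act γ z) y = G.Q z y
  mem_mov : ∀ x, x ∈ G.mov γ
  /-- The position of a positive root in the total order of the positive roots. -/
  key : V → ℕ
  key_inj : ∀ x y, G.Pos x → G.Pos y → key x = key y → x = y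
  E_nonneg_of_lt : ∀ x y, G.Pos x → G.Pos y → key x < key y → 0 ≤ E x y
  E_nonpos_of_lt : ∀ x y, G.Pos x → G.Pos y → key x < key y → E y x ≤ 0

namespace CoxData

variable {cs : CoxeterSystem M W} {V : Type*} [AddCommGroup V] [Module ℝ V]
  {G : ReflRep cs V} {γ : W} (C : CoxData G γ)

lemma E_add_E (x y : V) : C.E x y + C.E y x = G.Q x y := by
  obtain ⟨z, rfl⟩ := G.mem_mov.1 (C.mem_mov x)
  obtain ⟨u, rfl⟩ := G.mem_mov.1 (C.mem_mov y)
  rw [C.E_sub, C.E_sub]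
  have h1 := G.Q_act γ z u
  have h2 := G.Q_symm z u
  have h3 := G.Q_symm u (G.act γ z)
  simp only [map_sub, LinearMap.sub_apply]
  linarith

lemma E_self {x : V} (hx : x ∈ G.Φ) : C.E x x = 1 / 2 := by
  have h1 := C.E_add_E x x
  rw [G.Q_self x hx] at h1
  linarith

lemma E_nonneg {x y : V} (hx : G.Pos x) (hy : G.Pos y) (h : C.key x ≤ C.key y) :
    0 ≤ C.E x y := by
  rcases h.lt_or_eq with h | h
  · exact C.E_nonneg_of_lt x y hx hy h
  · obtain rfl := C.key_inj x y hx hy h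
    rw [C.E_self hx.1]; norm_num

/-- Dominant vectors of the moved space of `w`. Every nonnegative combination of positive roots
in the moved space is dominant, and dominance allows an induction which decomposes the vector. -/
def Dom (w : W) (x : V) : Prop :=
  x ∈ G.mov w ∧ ∀ ι, G.Pos ι → ι ∈ G.mov w → G.ht (G.act w ι) < 0 → 0 ≤ C.E x ι

lemma pos_or {x : V} (hx : x ∈ G.Φ) : G.Pos x ∨ G.Pos (-x) := by
  rcases (G.ht_ne x hx).lt_or_gt with h | h
  · exact Or.inr ⟨G.neg_mem x hx, by rw [map_neg]; linarith⟩
  · exact Or.inl ⟨hx, h⟩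

lemma dom_sum {ι : Type*} {w : W} (s : Finset ι) (c : ι → ℝ) (y : ι → V)
    (hc : ∀ i ∈ s, 0 ≤ c i) (hy : ∀ i ∈ s, C.Dom w (y i)) : C.Dom w (∑ i ∈ s, c i • y i) := by
  refine ⟨Submodule.sum_mem _ fun i hi => Submodule.smul_mem _ _ (hy i hi).1, ?_⟩
  intro κ h1 h2 h3
  rw [map_sum, LinearMap.sum_apply]
  refine Finset.sum_nonneg fun i hi => ?_
  rw [map_smul, LinearMap.smul_apply, smul_eq_mul]
  exact mul_nonneg (hc i hi) ((hy i hi).2 κ h1 h2 h3)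

lemma act_refl_mul {x : V} (hx : x ∈ G.Φ) (w : W) (v : V) :
    G.act (G.refl x * w) v = G.act w v - (2 * G.Q (G.act w v) x) • x := by
  rw [G.act_mul, G.refl_act x hx]

variable [FiniteDimensional ℝ V]

/-- The defining property of `E` with respect to `γ` persists for every `w ≤ γ`, as long as the
second argument is in the moved space of `w`. -/
lemma E_sub_of_rle {w : W} (hw : rle cs w γ) (z : V) {y : V} (hy : y ∈ G.mov w) :
    C.E (z - G.act w z) y = G.Q z y := by
  induction hn : rlen cs γ - rlen cs w using Nat.strong_induction_on generalizing w z y with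
  | _ n ih =>
    by_cases hne : w = γ
    · subst hne; exact C.E_sub z y
    obtain ⟨x, hx, w₁, hw₁, hxw, rfl⟩ := G.exists_cover hw hne
    have h1 := G.rlen_refl_mul hx hxw
    have h2 : rlen cs w₁ ≤ rlen cs γ := by unfold rle at hw₁; omega
    have h3 := fun z y hy => ih _ (by omega) hw₁ z (y := y) hy rfl
    have hy₁ := G.mov_refl_mul_le_of_mem hx hxw hy
    obtain ⟨z0, hz0⟩ := G.mem_mov.1 hxw
    have h4 : C.E x y = 0 := by
      rw [← hz0, h3 _ _ hy₁]
      exact G.Q_fix_mov (G.refl_mul_fix hx hz0) hy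
    have h5 : z - G.act (G.refl x * w₁) z =
        (z - G.act w₁ z) + (2 * G.Q (G.act w₁ z) x) • x := by
      rw [G.act_mul, G.refl_act x hx]; abel
    rw [h5, map_add, LinearMap.add_apply, h3 _ _ hy₁, map_smul, LinearMap.smul_apply, h4]
    simp

lemma mem_mov_refl_mul_iff {w : W} (hw : rle cs w γ) {x : V} (hx : x ∈ G.Φ)
    (hxw : x ∈ G.mov w) (y : V) :
    y ∈ G.mov (G.refl x * w) ↔ y ∈ G.mov w ∧ C.E x y = 0 := by
  have key : ∀ y ∈ G.mov (G.refl x * w), C.E x y = 0 := by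
    intro y hy
    obtain ⟨z0, hz0⟩ := G.mem_mov.1 hxw
    rw [← hz0, C.E_sub_of_rle hw _ (G.mov_refl_mul_le_of_mem hx hxw hy)]
    exact G.Q_fix_mov (G.refl_mul_fix hx hz0) hy
  refine ⟨fun hy => ⟨G.mov_refl_mul_le_of_mem hx hxw hy, key y hy⟩, ?_⟩
  rintro ⟨hy, hxy⟩
  obtain ⟨v, rfl⟩ := G.mem_mov.1 hy
  have h5 : v - G.act (G.refl x * w) v =
      (v - G.act w v) + (2 * G.Q (G.act w v) x) • x := by
    rw [G.act_mul, G.refl_act x hx]; abel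
  have h6 := G.sub_mem_mov (G.refl x * w) v
  have h7 := key _ h6
  rw [h5, map_add, hxy, map_smul, C.E_self hx, smul_eq_mul] at h7
  have h8 : 2 * G.Q (G.act w v) x = 0 := by linarith
  rw [h5, h8] at h6
  simpa using h6

/-- Serre duality for the form `E` on the moved space of `w ≤ γ`. -/
lemma E_act {w : W} (hw : rle cs w γ) {x y : V} (hx : x ∈ G.mov w) (hy : y ∈ G.mov w) :
    C.E (G.act w x) y = - C.E y x := by
  obtain ⟨z, rfl⟩ := G.mem_mov.1 hx
  obtain ⟨u, rfl⟩ := G.mem_mov.1 hy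
  rw [map_sub (G.act w), C.E_sub_of_rle hw _ (G.sub_mem_mov w u),
    C.E_sub_of_rle hw _ (G.sub_mem_mov w z)]
  have h1 := G.Q_act w z u
  have h2 := G.Q_symm z u
  have h3 := G.Q_symm u (G.act w z)
  simp only [map_sub]
  linarith

/-- Below `γ`, the absolute order is inclusion of moved spaces. -/
lemma rle_of_mov_le (C : CoxData G γ) {u w : W} (hu : rle cs u γ) (hw : rle cs w γ)
    (h : G.mov u ≤ G.mov w) : rle cs u w := by
  induction hn : rlen cs u using Nat.strong_induction_on generalizing u w with
  | _ n ih =>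
    by_cases h1 : u = 1
    · subst h1; simp [rle, rlen_one]
    obtain ⟨x, hx, hxu⟩ := G.exists_root_mem u h1
    have hxu : x ∈ G.mov u := G.mem_mov.2 hxu
    have hxw := h hxu
    have h2 := G.rlen_refl_mul hx hxu
    have h3 := G.rlen_refl_mul hx hxw
    have h4 : rle cs (G.refl x * u) (G.refl x * w) := by
      refine ih _ (by omega) (G.rle_refl_mul hu hx hxu) (G.rle_refl_mul hw hx hxw) ?_ rfl
      intro y hy
      rw [C.mem_mov_refl_mul_iff hu hx hxu] at hy
      rw [C.mem_mov_refl_mul_iff hw hx hxw]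
      exact ⟨h hy.1, hy.2⟩
    have h5 : (G.refl x * u)⁻¹ * (G.refl x * w) = u⁻¹ * w := by group
    unfold rle at h4 ⊢
    rw [h5] at h4
    omega

/-! ### Decomposing dominant vectors -/

lemma dom_of_pos {w : W} (hw : rle cs w γ) {y : V} (hy : G.Pos y) (hyw : y ∈ G.mov w) :
    C.Dom w y := by
  refine ⟨hyw, fun ι hι hιw hneg => ?_⟩
  have hπ : G.Pos (-G.act w ι) := ⟨G.neg_mem _ (G.act_mem w ι hι.1), by rw [map_neg]; linarith⟩
  have h1 : C.E (-G.act w ι) y = C.E y ι := by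
    rw [map_neg, LinearMap.neg_apply, C.E_act hw hιw hyw, neg_neg]
  have h2 : C.E (-G.act w ι) ι = 1 / 2 := by
    rw [map_neg, LinearMap.neg_apply, C.E_act hw hιw hιw, neg_neg, C.E_self hι.1]
  rcases le_or_gt (C.key y) (C.key ι) with h | h
  · exact C.E_nonneg hy hι h
  · rw [← h1]
    apply C.E_nonneg hπ hy
    by_contra! h3
    have := C.E_nonpos_of_lt ι _ hι hπ (h.trans h3)
    rw [h2] at this
    norm_num at this

/-- A nonzero dominant vector pairs positively with some positive root of the moved space. -/
lemma exists_E_pos {w : W} (hw : rle cs w γ) {x : V} (hx : C.Dom w x) (hx0 : x ≠ 0) :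
    ∃ ρ, G.Pos ρ ∧ ρ ∈ G.mov w ∧ 0 < C.E ρ x := by
  induction hn : rlen cs w using Nat.strong_induction_on generalizing w with
  | _ n ih =>
    have hw1 : w ≠ 1 := by
      rintro rfl
      have := hx.1
      rw [G.mov_one] at this
      exact hx0 (by simpa using this)
    have hne : {ρ | G.Pos ρ ∧ ρ ∈ G.mov w}.Nonempty := by
      obtain ⟨y, hy, hyw⟩ := G.exists_root_mem w hw1
      have hyw := G.mem_mov.2 hyw
      rcases pos_or hy with h | h
      exacts [⟨y, h, hyw⟩, ⟨-y, h, Submodule.neg_mem _ hyw⟩]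
    have hfin : {ρ | G.Pos ρ ∧ ρ ∈ G.mov w}.Finite :=
      G.finite_Φ.subset fun ρ h => h.1.1
    obtain ⟨ρ, ⟨hρ, hρw⟩, hmin⟩ := Set.exists_min_image _ C.key hfin hne
    -- the root `w⁻¹ ρ` is negative because `ρ` is first
    have hι0 : G.Pos (-G.act w⁻¹ ρ) := by
      rcases pos_or (G.act_mem w⁻¹ ρ hρ.1) with h | h
      · exfalso
        have h1 := C.E_act hw (G.act_inv_mem_mov hρw) hρw
        rw [G.act_act_inv, C.E_self hρ.1] at h1
        have h2 := C.E_nonneg hρ h (hmin _ ⟨h, G.act_inv_mem_mov hρw⟩)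
        linarith
      · exact h
    have hιmov : -G.act w⁻¹ ρ ∈ G.mov w := Submodule.neg_mem _ (G.act_inv_mem_mov hρw)
    have hwι0 : G.act w (-G.act w⁻¹ ρ) = -ρ := by rw [map_neg, G.act_act_inv]
    have hρx : 0 ≤ C.E ρ x := by
      have h1 := hx.2 _ hι0 hιmov (by rw [hwι0, map_neg]; linarith [hρ.2])
      have h2 := C.E_act hw hιmov hx.1
      rw [hwι0, map_neg, LinearMap.neg_apply] at h2
      linarith
    rcases hρx.lt_or_eq with h | h
    · exact ⟨ρ, hρ, hρw, h⟩
    have hdom : C.Dom (G.refl ρ * w) x := by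
      refine ⟨(C.mem_mov_refl_mul_iff hw hρ.1 hρw x).2 ⟨hx.1, h.symm⟩, ?_⟩
      intro ι hι hιw hneg
      obtain ⟨hιw, hρι⟩ := (C.mem_mov_refl_mul_iff hw hρ.1 hρw ι).1 hιw
      rcases (G.ht_ne _ (G.act_mem w ι hι.1)).lt_or_gt with h1 | h1
      · exact hx.2 ι hι hιw h1
      exfalso
      have hσw := G.act_mem_mov hιw
      have hσρ : C.E (G.act w ι) ρ = 0 := by rw [C.E_act hw hιw hρw, hρι, neg_zero]
      have hηΦ := G.act_mem (G.refl ρ * w) ι hι.1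
      rw [act_refl_mul hρ.1] at hneg hηΦ
      have hη : G.Pos (-(G.act w ι - (2 * G.Q (G.act w ι) ρ) • ρ)) :=
        ⟨G.neg_mem _ hηΦ, by rw [map_neg]; linarith⟩
      have hηw : -(G.act w ι - (2 * G.Q (G.act w ι) ρ) • ρ) ∈ G.mov w :=
        Submodule.neg_mem _ (Submodule.sub_mem _ hσw (Submodule.smul_mem _ _ hρw))
      generalize hb : 2 * G.Q (G.act w ι) ρ = b at *
      have hbpos : 0 < b := by
        simp only [map_sub, map_smul, smul_eq_mul] at hneg
        by_contra! hb0
        nlinarith [hρ.2, mul_nonneg (neg_nonneg.2 hb0) hρ.2.le]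
      have hE : C.E (-(G.act w ι - b • ρ)) ρ = b / 2 := by
        simp only [map_neg, map_sub, map_smul, LinearMap.neg_apply, LinearMap.sub_apply,
          LinearMap.smul_apply, hσρ, C.E_self hρ.1, smul_eq_mul]
        ring
      rcases (hmin _ ⟨hη, hηw⟩).lt_or_eq with h2 | h2
      · have := C.E_nonpos_of_lt _ _ hρ hη h2
        rw [hE] at this
        linarith
      · have h3 := C.key_inj _ _ hρ hη h2
        rw [← h3, C.E_self hρ.1] at hE
        have hb1 : b = 1 := by linarith
        subst hb1
        have h4 : G.act w ι = 0 := by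
          rw [one_smul, neg_sub] at h3
          exact sub_eq_self.1 h3.symm
        rw [h4] at h1
        simp at h1
    obtain ⟨ρ', h1, h2, h3⟩ := ih _ (by have := G.rlen_refl_mul hρ.1 hρw; omega)
      (G.rle_refl_mul hw hρ.1 hρw) hdom rfl
    exact ⟨ρ', h1, G.mov_refl_mul_le_of_mem hρ.1 hρw h2, h3⟩

end CoxData

/-- `Dec l x` says that `x` is a combination of the entries of `l` with strictly positive
coefficients. -/
inductive Dec {V : Type*} [AddCommGroup V] [Module ℝ V] : List V → V → Prop
  | nil : Dec [] 0
  | cons {ρ : V} {l : List V} {c : ℝ} {x : V} (hc : 0 < c) (h : Dec l x) :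
      Dec (ρ :: l) (c • ρ + x)

namespace CoxData

variable {cs : CoxeterSystem M W} {V : Type*} [AddCommGroup V] [Module ℝ V]
  {G : ReflRep cs V} {γ : W} (C : CoxData G γ)

/-- A list of positive roots, decreasing for the root order, and triangular for `E`. -/
def Good (l : List V) : Prop :=
  (∀ a ∈ l, G.Pos a) ∧ l.Pairwise fun a b => C.key b < C.key a ∧ C.E a b = 0

lemma Dec.mem_span {l : List V} {x : V} (h : Dec l x) : x ∈ Submodule.span ℝ {a | a ∈ l} := by
  induction h with
  | nil => exact Submodule.zero_mem _
  | @cons ρ l c x hc h ih =>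
    refine Submodule.add_mem _ (Submodule.smul_mem _ _ (Submodule.subset_span (by simp))) ?_
    exact Submodule.span_mono (fun a ha => by simp at ha ⊢; exact Or.inr ha) ih

lemma Dec.E_nonpos {l : List V} {x : V} (h : Dec l x) {a : V} (ha : ∀ b ∈ l, C.E a b ≤ 0) :
    C.E a x ≤ 0 := by
  induction h with
  | nil => simp
  | @cons ρ l c x hc h ih =>
    rw [map_add, map_smul, smul_eq_mul]
    have h1 := ih fun b hb => ha b (by simp [hb])
    have h2 := ha ρ (by simp)
    nlinarith

lemma Dec.E_zero {l : List V} {x : V} (h : Dec l x) {a : V} (ha : ∀ b ∈ l, C.E a b = 0) :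
    C.E a x = 0 := by
  induction h with
  | nil => simp
  | @cons ρ l c x hc h ih =>
    rw [map_add, map_smul, smul_eq_mul, ih fun b hb => ha b (by simp [hb]), ha ρ (by simp)]
    simp

lemma Good.E_head {ρ : V} {l : List V} (hl : C.Good (ρ :: l)) {c : ℝ} {x : V} (h : Dec l x) :
    C.E ρ (c • ρ + x) = c / 2 := by
  have h1 := Dec.E_zero C h (a := ρ) fun b hb => ((List.pairwise_cons.1 hl.2).1 b hb).2
  rw [map_add, map_smul, smul_eq_mul, h1, C.E_self (hl.1 ρ (by simp)).1]
  ring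

lemma Good.tail {ρ : V} {l : List V} (hl : C.Good (ρ :: l)) : C.Good l :=
  ⟨fun a ha => hl.1 a (by simp [ha]), (List.pairwise_cons.1 hl.2).2⟩

/-- When the same vector decomposes along two good lists, the first entry of one does not precede
the first entry of the other: `E σ` is positive on the vector, but nonpositive on every entry of
the list of `ρ` if `ρ` precedes `σ`. -/
lemma Good.head_not_lt {ρ σ : V} {l m : List V} (hl : C.Good (ρ :: l)) (hm : C.Good (σ :: m))
    {x : V} (h : Dec (ρ :: l) x) (h' : Dec (σ :: m) x) : ¬ C.key ρ < C.key σ := by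
  intro hlt
  have h1 : C.E σ x ≤ 0 := by
    apply Dec.E_nonpos C h
    intro b hb
    apply C.E_nonpos_of_lt b σ (hl.1 b hb) (hm.1 σ (by simp))
    rcases List.mem_cons.1 hb with rfl | hb
    · exact hlt
    · exact ((List.pairwise_cons.1 hl.2).1 b hb).1.trans hlt
  cases h' with
  | cons hc h' =>
    rw [Good.E_head C hm h'] at h1
    linarith

/-- A vector is a positive combination of at most one good list. -/
lemma Good.unique {l m : List V} {x : V} (hl : C.Good l) (hm : C.Good m) (h : Dec l x)
    (h' : Dec m x) : l = m := by
  induction l generalizing m x with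
  | nil =>
    cases h
    generalize hx : (0 : V) = x at h'
    cases h' with
    | nil => rfl
    | @cons _ _ c _ hc h' =>
      have := Good.E_head C hm (c := c) h'
      rw [← hx] at this
      simp at this
      linarith
  | cons ρ l ih =>
    cases m with
    | nil =>
      cases h'
      generalize hx : (0 : V) = x at h
      cases h with
      | @cons _ _ c _ hc h =>
        have := Good.E_head C hl (c := c) h
        rw [← hx] at this
        simp at this
        linarith
    | cons σ m =>
      have h1 := Good.head_not_lt C hl hm h h'
      have h2 := Good.head_not_lt C hm hl h' h
      obtain rfl : ρ = σ := C.key_inj _ _ (hl.1 ρ (by simp)) (hm.1 σ (by simp)) (by omega)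
      cases h with
      | @cons _ _ c x₁ hc h =>
        generalize hx : c • ρ + x₁ = x at h'
        cases h' with
        | @cons _ _ c' x₂ hc' h' =>
          have e1 := Good.E_head C hl (c := c) h
          have e2 := Good.E_head C hm (c := c') h'
          rw [hx, e2] at e1
          obtain rfl : c' = c := by linarith
          obtain rfl : x₁ = x₂ := by simpa using hx
          rw [ih (Good.tail C hl) (Good.tail C hm) h h']

variable [FiniteDimensional ℝ V]

/-- Every dominant vector of the moved space of `w ≤ γ` is a positive combination of a good list
of roots of that moved space. -/
lemma exists_dec {w : W} (hw : rle cs w γ) {x : V} (hx : C.Dom w x) :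
    ∃ l : List V, C.Good l ∧ (∀ a ∈ l, a ∈ G.mov w) ∧ Dec l x := by
  induction hn : rlen cs w using Nat.strong_induction_on generalizing w x with
  | _ n ih =>
    by_cases hx0 : x = 0
    · subst hx0
      exact ⟨[], ⟨by simp, by simp⟩, by simp, Dec.nil⟩
    have hne : {ρ | G.Pos ρ ∧ ρ ∈ G.mov w ∧ 0 < C.E ρ x}.Nonempty := C.exists_E_pos hw hx hx0
    have hfin : {ρ | G.Pos ρ ∧ ρ ∈ G.mov w ∧ 0 < C.E ρ x}.Finite :=
      G.finite_Φ.subset fun ρ h => h.1.1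
    obtain ⟨ρ, ⟨hρ, hρw, hρx⟩, hmax⟩ := Set.exists_max_image _ C.key hfin hne
    have hρρ := C.E_self hρ.1
    generalize hx' : x - (2 * C.E ρ x) • ρ = x'
    have hxx' : x = (2 * C.E ρ x) • ρ + x' := by rw [← hx']; abel
    have hρx' : C.E ρ x' = 0 := by
      rw [← hx', map_sub, map_smul, smul_eq_mul, hρρ]; ring
    have hx'w : x' ∈ G.mov w := by
      rw [← hx']; exact Submodule.sub_mem _ hx.1 (Submodule.smul_mem _ _ hρw)
    have hmem := C.mem_mov_refl_mul_iff hw hρ.1 hρw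
    have hdom : C.Dom (G.refl ρ * w) x' := by
      refine ⟨(hmem x').2 ⟨hx'w, hρx'⟩, ?_⟩
      intro ι hι hιw hneg
      obtain ⟨hιw, hρι⟩ := (hmem ι).1 hιw
      have hxι : C.E x' ι = C.E x ι := by
        rw [← hx', map_sub, map_smul, LinearMap.sub_apply, LinearMap.smul_apply, hρι]; simp
      rw [hxι]
      rcases (G.ht_ne _ (G.act_mem w ι hι.1)).lt_or_gt with h1 | h1
      · exact hx.2 ι hι hιw h1
      by_contra! hlt
      have hσ : G.Pos (G.act w ι) := ⟨G.act_mem w ι hι.1, h1⟩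
      have hσw := G.act_mem_mov hιw
      have hσx : 0 < C.E (G.act w ι) x := by rw [C.E_act hw hιw hx.1]; linarith
      have hσρ : C.E (G.act w ι) ρ = 0 := by rw [C.E_act hw hιw hρw, hρι, neg_zero]
      have hkey : C.key (G.act w ι) < C.key ρ := by
        refine lt_of_le_of_ne (hmax _ ⟨hσ, hσw, hσx⟩) fun h => ?_
        rw [C.key_inj _ _ hσ hρ h, hρρ] at hσρ
        norm_num at hσρ
      have h2 := C.E_nonpos_of_lt _ _ hσ hρ hkey
      have h3 := C.E_add_E (G.act w ι) ρ
      rw [act_refl_mul hρ.1, map_sub, map_smul, smul_eq_mul, ← h3, hσρ] at hneg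
      nlinarith [hρ.2, mul_nonneg (neg_nonneg.2 h2) hρ.2.le]
    obtain ⟨l, hl, hlw, hdec⟩ := ih _ (by have := G.rlen_refl_mul hρ.1 hρw; omega)
      (G.rle_refl_mul hw hρ.1 hρw) hdom rfl
    have hρl : ∀ b ∈ l, C.E ρ b = 0 := fun b hb => ((hmem b).1 (hlw b hb)).2
    have hhead : ∀ b ∈ l, C.key b < C.key ρ := by
      cases hdec with
      | nil => simp
      | @cons σ l c x₁ hc hdec =>
        have hσx' : 0 < C.E σ (c • σ + x₁) := by
          rw [Good.E_head C hl hdec]; linarith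
        generalize c • σ + x₁ = x' at *
        have hσ := hl.1 σ (by simp)
        have hρσ := hρl σ (by simp)
        have hσw := ((hmem σ).1 (hlw σ (by simp))).1
        have hlt : C.key σ < C.key ρ := by
          by_contra! hle
          have hlt : C.key ρ < C.key σ := by
            refine lt_of_le_of_ne hle fun h => ?_
            rw [C.key_inj _ _ hρ hσ h, C.E_self hσ.1] at hρσ
            norm_num at hρσ
          -- reflect `σ` in `ρ` to contradict the maximality of `ρ`
          have h1 := C.E_nonpos_of_lt _ _ hρ hσ hlt
          have hQ : G.Q σ ρ = C.E σ ρ := by rw [← C.E_add_E, hρσ, add_zero]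
          have hact := G.refl_act ρ hρ.1 σ
          have hτ : G.Pos (σ - (2 * G.Q σ ρ) • ρ) := by
            refine ⟨hact ▸ G.act_mem _ σ hσ.1, ?_⟩
            rw [map_sub, map_smul, smul_eq_mul, hQ]
            nlinarith [hρ.2, hσ.2, mul_nonneg (neg_nonneg.2 h1) hρ.2.le]
          have hτw : σ - (2 * G.Q σ ρ) • ρ ∈ G.mov w :=
            Submodule.sub_mem _ hσw (Submodule.smul_mem _ _ hρw)
          rw [hQ] at hτ hτw
          have hτx : 0 < C.E (σ - (2 * C.E σ ρ) • ρ) x := by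
            have e1 : C.E σ x = 2 * C.E ρ x * C.E σ ρ + C.E σ x' := by
              conv_lhs => rw [hxx']
              rw [map_add, map_smul, smul_eq_mul]
            rw [map_sub, map_smul, LinearMap.sub_apply, LinearMap.smul_apply, smul_eq_mul, e1]
            linarith
          have hρτ : C.E ρ (σ - (2 * C.E σ ρ) • ρ) = - C.E σ ρ := by
            rw [map_sub, map_smul, smul_eq_mul, hρσ, hρρ]; ring
          rcases (hmax _ ⟨hτ, hτw, hτx⟩).lt_or_eq with h2 | h2
          · have h3 := C.E_nonpos_of_lt _ _ hτ hρ h2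
            have h4 : C.E σ ρ = 0 := by linarith
            rw [h4] at h2
            simp at h2
            omega
          · have h3 := C.key_inj _ _ hτ hρ h2
            rw [h3, hρρ] at hρτ
            have h4 : C.E σ ρ = -(1 / 2) := by linarith
            rw [h4] at h3
            have h5 : σ = 0 := by
              have : (2 * -(1 / 2 : ℝ)) = -1 := by norm_num
              rw [this] at h3
              simpa using h3
            exact G.ne_zero hσ.1 h5
        intro b hb
        rcases List.mem_cons.1 hb with rfl | hb
        · exact hlt
        · exact ((List.pairwise_cons.1 hl.2).1 b hb).1.trans hlt
    refine ⟨ρ :: l, ⟨?_, ?_⟩, ?_, ?_⟩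
    · intro a ha
      rcases List.mem_cons.1 ha with rfl | ha
      exacts [hρ, hl.1 a ha]
    · exact List.pairwise_cons.2 ⟨fun b hb => ⟨hhead b hb, hρl b hb⟩, hl.2⟩
    · intro a ha
      rcases List.mem_cons.1 ha with rfl | ha
      exacts [hρw, ((hmem a).1 (hlw a ha)).1]
    · rw [hxx']
      exact Dec.cons (by linarith) hdec

/-! ### Meets and joins -/

/-- The reflections of an `E`-triangular list of roots of `mov w` can be split off `w` one by one,
each lowering the reflection length by one. -/
lemma rlen_prod_inv_mul {w : W} (hw : rle cs w γ) (l : List V)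
    (hl : ∀ a ∈ l, a ∈ G.Φ ∧ a ∈ G.mov w) (hE : l.Pairwise fun a b => C.E a b = 0) :
    rlen cs ((l.map G.refl).prod⁻¹ * w) + l.length = rlen cs w := by
  induction l generalizing w with
  | nil => simp
  | cons ρ l ih =>
    obtain ⟨hρ, hρw⟩ := hl ρ (by simp)
    rw [List.pairwise_cons] at hE
    have h1 := ih (G.rle_refl_mul hw hρ hρw) (fun a ha => ⟨(hl a (by simp [ha])).1,
      (C.mem_mov_refl_mul_iff hw hρ hρw a).2 ⟨(hl a (by simp [ha])).2, hE.1 a ha⟩⟩) hE.2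
    have h2 := G.rlen_refl_mul hρ hρw
    have h3 : ((ρ :: l).map G.refl).prod⁻¹ * w = (l.map G.refl).prod⁻¹ * (G.refl ρ * w) := by
      rw [List.map_cons, List.prod_cons, mul_inv_rev, (G.refl_isReflection ρ hρ).inv, mul_assoc]
    rw [h3, List.length_cons]
    omega

/-- The span of an `E`-triangular list of roots is the moved space of an element below `γ`. -/
lemma exists_mov_eq_span (l : List V) (hl : ∀ a ∈ l, a ∈ G.Φ)
    (hE : l.Pairwise fun a b => C.E a b = 0) :
    ∃ m, rle cs m γ ∧ G.mov m = Submodule.span ℝ {a | a ∈ l} := by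
  classical
  have h1 := C.rlen_prod_inv_mul (rle_refl cs γ) l (fun a ha => ⟨hl a ha, C.mem_mov a⟩) hE
  have h2 : rlen cs (l.map G.refl).prod ≤ l.length := by
    refine (rlen_le_length cs ?_).trans (by simp)
    intro t ht
    obtain ⟨a, ha, rfl⟩ := List.mem_map.1 ht
    exact G.refl_isReflection a (hl a ha)
  have h3 := rlen_mul_le cs (l.map G.refl).prod ((l.map G.refl).prod⁻¹ * γ)
  rw [mul_inv_cancel_left] at h3
  refine ⟨(l.map G.refl).prod, by unfold rle; omega, ?_⟩
  have h4 : G.mov (l.map G.refl).prod ≤ Submodule.span ℝ {a | a ∈ l} := by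
    clear h1 h2 h3 hE
    induction l with
    | nil => rw [List.map_nil, List.prod_nil, G.mov_one]; exact bot_le
    | cons ρ l ih =>
      rw [List.map_cons, List.prod_cons]
      refine (G.mov_refl_mul_le (hl ρ (by simp)) _).trans (sup_le ?_ ?_)
      · exact (ih fun a ha => hl a (by simp [ha])).trans
          (Submodule.span_mono fun a ha => by simp at ha ⊢; exact Or.inr ha)
      · exact Submodule.span_mono (by simp)
  apply Submodule.eq_of_le_of_finrank_le h4
  rw [← G.rlen_eq_finrank]
  have h5 : {a | a ∈ l} = (l.toFinset : Set V) := by ext; simp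
  rw [h5]
  refine (finrank_span_finset_le_card _).trans ((List.toFinset_card_le l).trans ?_)
  omega

/-- The intersection of two moved spaces contains the moved space of an element below `γ` that
contains all the roots of the intersection. The roots are `ρ₀, …, ρ_{p-1}`; the vectors
`∑ tⁱ ρᵢ` are dominant for both elements, so by uniqueness their decompositions only use common
roots; by pigeonhole infinitely many `t` have the same support, whose span must contain all `ρᵢ`
by a Vandermonde argument. -/
lemma exists_inf (C : CoxData G γ) {u w : W} (hu : rle cs u γ) (hw : rle cs w γ) :
    ∃ m, rle cs m γ ∧ G.mov m ≤ G.mov u ∧ G.mov m ≤ G.mov w ∧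
      ∀ x ∈ G.Φ, x ∈ G.mov u → x ∈ G.mov w → x ∈ G.mov m := by
  have hfin : {x | G.Pos x ∧ x ∈ G.mov u ∧ x ∈ G.mov w}.Finite :=
    G.finite_Φ.subset fun ρ h => h.1.1
  obtain ⟨p, ρ, -, hρ⟩ := hfin.fin_param
  have hρmem : ∀ i, G.Pos (ρ i) ∧ ρ i ∈ G.mov u ∧ ρ i ∈ G.mov w := by
    intro i
    have : ρ i ∈ Set.range ρ := ⟨i, rfl⟩
    rw [hρ] at this
    exact this
  have hex : ∀ t : ℕ, ∃ l : List V, C.Good l ∧ (∀ a ∈ l, a ∈ Set.range ρ) ∧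
      Dec l (∑ i : Fin p, ((t : ℝ) ^ (i : ℕ)) • ρ i) := by
    intro t
    have hd : ∀ v, rle cs v γ → (∀ i, ρ i ∈ G.mov v) →
        C.Dom v (∑ i : Fin p, ((t : ℝ) ^ (i : ℕ)) • ρ i) := fun v hv hm =>
      C.dom_sum _ _ _ (fun i _ => by positivity) fun i _ => C.dom_of_pos hv (hρmem i).1 (hm i)
    obtain ⟨l, hl, hlu, hdec⟩ := C.exists_dec hu (hd u hu fun i => (hρmem i).2.1)
    obtain ⟨l', hl', hlw, hdec'⟩ := C.exists_dec hw (hd w hw fun i => (hρmem i).2.2)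
    obtain rfl := Good.unique C hl hl' hdec hdec'
    refine ⟨l, hl, fun a ha => ?_, hdec⟩
    rw [hρ]
    exact ⟨hl.1 a ha, hlu a ha, hlw a ha⟩
  choose l hl hlρ hdec using hex
  obtain ⟨S, hS⟩ := Finite.exists_infinite_fiber fun t => {i | ρ i ∈ l t}
  have hSinf := Set.infinite_coe_iff.1 hS
  obtain ⟨t₀, ht₀⟩ := hSinf.nonempty
  have hspan : ∀ i, ρ i ∈ Submodule.span ℝ {a | a ∈ l t₀} := by
    by_contra! hcon
    obtain ⟨i, hi⟩ := hcon
    obtain ⟨f, hfi, hf⟩ := Submodule.exists_le_ker_of_notMem hi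
    let P : Polynomial ℝ := ∑ j : Fin p, Polynomial.C (f (ρ j)) * Polynomial.X ^ (j : ℕ)
    have hP : P = 0 := by
      apply Polynomial.eq_zero_of_infinite_isRoot
      refine (hSinf.image (f := fun t : ℕ => (t : ℝ)) Nat.cast_injective.injOn).mono ?_
      rintro _ ⟨t, ht, rfl⟩
      have h1 : ∑ i : Fin p, ((t : ℝ) ^ (i : ℕ)) • ρ i ∈ Submodule.span ℝ {a | a ∈ l t₀} := by
        refine Submodule.span_mono ?_ (Dec.mem_span (hdec t))
        intro a ha
        obtain ⟨j, rfl⟩ := hlρ t a ha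
        have h2 : j ∈ {i | ρ i ∈ l t₀} := by
          rw [show {i | ρ i ∈ l t₀} = S from ht₀, ← show {i | ρ i ∈ l t} = S from ht]
          exact ha
        exact h2
      have h3 := hf h1
      rw [LinearMap.mem_ker, map_sum] at h3
      simp only [Set.mem_ofPred_eq, Polynomial.IsRoot, P, Polynomial.eval_finsetSum]
      rw [← h3]
      exact Finset.sum_congr rfl fun j _ => by
        rw [Polynomial.eval_mul, Polynomial.eval_C, Polynomial.eval_pow, Polynomial.eval_X, map_smul,
          smul_eq_mul, mul_comm]
    have hc : P.coeff i = f (ρ i) := by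
      simp only [P, Polynomial.finsetSum_coeff, Polynomial.coeff_C_mul_X_pow]
      rw [Finset.sum_eq_single i]
      · simp
      · intro j _ hj
        rw [if_neg]
        exact fun h => hj (Fin.ext h.symm)
      · simp
    rw [hP, Polynomial.coeff_zero] at hc
    exact hfi hc.symm
  obtain ⟨m, hm, hmov⟩ := C.exists_mov_eq_span (l t₀) (fun a ha => ((hl t₀).1 a ha).1)
    ((hl t₀).2.imp fun h => h.2)
  refine ⟨m, hm, ?_, ?_, ?_⟩
  · rw [hmov, Submodule.span_le]
    intro a ha
    obtain ⟨j, rfl⟩ := hlρ t₀ a ha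
    exact (hρmem j).2.1
  · rw [hmov, Submodule.span_le]
    intro a ha
    obtain ⟨j, rfl⟩ := hlρ t₀ a ha
    exact (hρmem j).2.2
  · have hpos : ∀ x, G.Pos x → x ∈ G.mov u → x ∈ G.mov w → x ∈ G.mov m := by
      intro x hx hxu hxw
      have : x ∈ Set.range ρ := by rw [hρ]; exact ⟨hx, hxu, hxw⟩
      obtain ⟨j, rfl⟩ := this
      rw [hmov]
      exact hspan j
    intro x hx hxu hxw
    rcases pos_or hx with h | h
    · exact hpos x h hxu hxw
    · have := hpos (-x) h (Submodule.neg_mem _ hxu) (Submodule.neg_mem _ hxw)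
      simpa using this

lemma exists_isIntervalGLB (C : CoxData G γ) {u w : W} (hu : rle cs u γ) (hw : rle cs w γ) :
    ∃ m, IsIntervalGLB cs γ {u, w} m := by
  obtain ⟨m, hm, hmu, hmw, hroots⟩ := C.exists_inf hu hw
  refine ⟨m, hm, ?_, ?_⟩
  · rintro x (rfl | rfl)
    exacts [C.rle_of_mov_le hm hu hmu, C.rle_of_mov_le hm hw hmw]
  · intro r hr hlow
    refine C.rle_of_mov_le hr hm ?_
    refine (G.mov_le_span r).trans (Submodule.span_le.2 ?_)
    rintro x ⟨hx, hxr⟩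
    exact hroots x hx (G.mov_le_of_rle (hlow u (by simp)) hxr)
      (G.mov_le_of_rle (hlow w (by simp)) hxr)

/-- A common upper bound of minimal length is the join: its meet with any other upper bound is
again an upper bound. -/
lemma exists_isIntervalLUB (C : CoxData G γ) {u w : W} (hu : rle cs u γ) (hw : rle cs w γ) :
    ∃ j, IsIntervalLUB cs γ {u, w} j := by
  have hne : {j | rle cs j γ ∧ rle cs u j ∧ rle cs w j}.Nonempty := ⟨γ, rle_refl cs γ, hu, hw⟩
  obtain ⟨j, ⟨hj, huj, hwj⟩, hmin⟩ :=
    (InvImage.wf (rlen cs) Nat.lt_wfRel.wf).has_min _ hne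
  refine ⟨j, hj, ?_, ?_⟩
  · rintro x (rfl | rfl)
    exacts [huj, hwj]
  · intro r hr hup
    obtain ⟨m, hm, hlow, hgreat⟩ := C.exists_isIntervalGLB hj hr
    have hum : rle cs u m := hgreat u hu (by
      rintro x (rfl | rfl)
      exacts [huj, hup u (by simp)])
    have hwm : rle cs w m := hgreat w hw (by
      rintro x (rfl | rfl)
      exacts [hwj, hup w (by simp)])
    have h1 : ¬ rlen cs m < rlen cs j := hmin m ⟨hm, hum, hwm⟩
    have h2 : rle cs m j := hlow j (by simp)
    have h3 : rle cs m r := hlow r (by simp)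
    have h4 : G.mov m = G.mov j := by
      apply Submodule.eq_of_le_of_finrank_le (G.mov_le_of_rle h2)
      rw [← G.rlen_eq_finrank, ← G.rlen_eq_finrank]
      omega
    exact C.rle_of_mov_le hj hr (h4 ▸ G.mov_le_of_rle h3)

end CoxData

/-! ### The geometric representation -/

section Geometric

open Real

/-- The entries `-cos (π / M i j)` of the Gram matrix of the geometric representation; the value
`M i j = 0`, which encodes infinite order, gives `-1`. -/
noncomputable def gram (M : CoxeterMatrix B) (i j : B) : ℝ := -cos (π / M i j)

lemma gram_symm (M : CoxeterMatrix B) (i j : B) : gram M i j = gram M j i := by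
  rw [gram, gram, M.symmetric]

lemma gram_self (M : CoxeterMatrix B) (i : B) : gram M i i = 1 := by
  simp [gram]

variable [DecidableEq B]

/-- The simple root `α i`. -/
noncomputable def sroot (i : B) : B → ℝ := Pi.single i 1

lemma sroot_ne_zero (i : B) : sroot i ≠ 0 := by
  intro h
  have := congrFun h i
  simp [sroot] at this

lemma sroot_nonneg (i : B) : 0 ≤ sroot i := by
  intro j
  by_cases h : j = i <;> simp [sroot, h]

variable [Fintype B]

/-- The simple coroot: the functional with value `2 * gram M i j` on `α j`. -/
noncomputable def scoroot (M : CoxeterMatrix B) (i : B) : Module.Dual ℝ (B → ℝ) :=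
  ∑ j, (2 * gram M i j) • LinearMap.proj j

lemma scoroot_sroot (M : CoxeterMatrix B) (i j : B) :
    scoroot M i (sroot j) = 2 * gram M i j := by
  simp [scoroot, sroot, Pi.single_apply]

lemma scoroot_sroot_self (M : CoxeterMatrix B) (i : B) : scoroot M i (sroot i) = 2 := by
  rw [scoroot_sroot, gram_self, mul_one]

lemma four_mul_gram_sq (M : CoxeterMatrix B) (i j : B) :
    scoroot M i (sroot j) * scoroot M j (sroot i) - 2 = 2 * cos (2 * π / M i j) := by
  rw [scoroot_sroot, scoroot_sroot, gram_symm M j i, gram, mul_div_assoc, cos_two_mul]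
  ring

lemma reflection_braid (M : CoxeterMatrix B) (i j : B) :
    (Module.reflection (scoroot_sroot_self M i) * Module.reflection (scoroot_sroot_self M j)) ^
      M i j = 1 := by
  by_cases hij : i = j
  · subst hij
    rw [M.diagonal, pow_one]
    ext1 z
    exact Module.involutive_reflection _ z
  have hm1 : M i j ≠ 1 := M.off_diagonal i j hij
  have hE := four_mul_gram_sq M i j
  by_cases hm2 : M i j = 2
  · have h0 : gram M i j = 0 := by rw [gram, hm2]; simp
    have h1 := scoroot_sroot M i j
    have h2 := scoroot_sroot M j i
    rw [gram_symm M j i] at h2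
    rw [h0, mul_zero] at h1 h2
    rw [hm2]
    ext1 z
    simp only [pow_two, LinearEquiv.mul_apply, Module.reflection_apply, map_sub, map_smul, h1, h2,
      scoroot_sroot_self, LinearEquiv.coe_one, id]
    module
  by_cases hm0 : M i j = 0
  · rw [hm0, pow_zero]
  ext1 z
  rw [Module.reflection_mul_reflection_pow_apply (scoroot_sroot_self M i)
    (scoroot_sroot_self M j) (M i j) z _ hE.symm]
  have hm3 : 3 ≤ M i j := by omega
  generalize M i j = m at *
  have hmR : (3 : ℝ) ≤ m := by exact_mod_cast hm3
  have hsin : sin (2 * π / m) ≠ 0 := by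
    apply ne_of_gt
    apply sin_pos_of_pos_of_lt_pi
    · positivity
    · rw [div_lt_iff₀ (by linarith)]
      nlinarith [pi_pos]
  have hS : ∀ n : ℤ, (Polynomial.Chebyshev.S ℝ n).eval (2 * cos (2 * π / m)) * sin (2 * π / m)
      = sin ((n + 1) * (2 * π / m)) := fun n =>
    Polynomial.Chebyshev.S_two_mul_real_cos (2 * π / m) n
  rcases Nat.even_or_odd' m with ⟨k, rfl | rfl⟩
  · have hk : ((2 * k : ℕ) : ℝ) = 2 * k := by push_cast; ring
    have e1 : (((2 * k : ℕ) : ℤ) - 2) / 2 = (k : ℤ) - 1 := by omega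
    have e2 : (((2 * k : ℕ) : ℤ) - 1) / 2 = (k : ℤ) - 1 := by omega
    have hz : (Polynomial.Chebyshev.S ℝ ((k : ℤ) - 1)).eval
        (2 * cos (2 * π / (2 * k : ℕ))) = 0 := by
      have h := hS ((k : ℤ) - 1)
      have h2 : ((((k : ℤ) - 1 : ℤ) : ℝ) + 1) * (2 * π / (2 * k : ℕ)) = π := by
        have : (k : ℝ) ≠ 0 := by
          rw [hk] at hmR
          intro h0
          rw [h0] at hmR
          norm_num at hmR
        push_cast
        field_simp
        ring
      rw [h2, sin_pi] at h
      exact (mul_eq_zero.1 h).resolve_right hsin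
    rw [e1, e2, hz]
    simp
  · have e1 : (((2 * k + 1 : ℕ) : ℤ) - 1) / 2 = (k : ℤ) := by omega
    have e2 : (((2 * k + 1 : ℕ) : ℤ) - 3) / 2 = (k : ℤ) - 1 := by omega
    have e3 : (((2 * k + 1 : ℕ) : ℤ)) / 2 = (k : ℤ) := by omega
    have e4 : (((2 * k + 1 : ℕ) : ℤ) - 2) / 2 = (k : ℤ) - 1 := by omega
    have hz : (Polynomial.Chebyshev.S ℝ (k : ℤ)).eval (2 * cos (2 * π / (2 * k + 1 : ℕ))) +
        (Polynomial.Chebyshev.S ℝ ((k : ℤ) - 1)).eval (2 * cos (2 * π / (2 * k + 1 : ℕ))) = 0 := by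
      have h := hS k
      have h' := hS ((k : ℤ) - 1)
      -- the two angles add up to `2 π`
      have h2 : (((k : ℤ) : ℝ) + 1) * (2 * π / (2 * k + 1 : ℕ)) =
          2 * π - ((((k : ℤ) - 1 : ℤ) : ℝ) + 1) * (2 * π / (2 * k + 1 : ℕ)) := by
        push_cast
        field_simp
        ring
      rw [h2, sin_two_pi_sub] at h
      rw [← h', ← neg_mul] at h
      have := mul_right_cancel₀ hsin h
      linarith
    rw [e1, e2, e3, e4, hz]
    simp

lemma isLiftable_reflection (M : CoxeterMatrix B) : M.IsLiftable fun i =>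
    ((Module.reflection (scoroot_sroot_self M i)).toLinearMap : Module.End ℝ (B → ℝ)) := by
  intro i j
  have h := congrArg LinearEquiv.toLinearMap (reflection_braid M i j)
  refine Eq.trans ?_ h
  exact (map_pow (LinearEquiv.automorphismGroup.toLinearMapMonoidHom (R := ℝ) (M := B → ℝ))
    (Module.reflection (scoroot_sroot_self M i) * Module.reflection (scoroot_sroot_self M j))
    (M i j)).symm

/-- The geometric representation. -/
noncomputable def rep (cs : CoxeterSystem M W) : W →* Module.End ℝ (B → ℝ) :=
  cs.lift ⟨_, isLiftable_reflection M⟩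

variable (cs : CoxeterSystem M W)

lemma rep_simple (i : B) (v : B → ℝ) :
    rep cs (cs.simple i) v = v - scoroot M i v • sroot i := by
  rw [rep, cs.lift_apply_simple]
  exact Module.reflection_apply (y := v) (scoroot_sroot_self M i)

lemma rep_mul (u v : W) (x : B → ℝ) : rep cs (u * v) x = rep cs u (rep cs v x) := by
  rw [map_mul]; rfl

lemma rep_one (x : B → ℝ) : rep cs 1 x = x := by rw [map_one]; rfl

lemma rep_inv_rep (u : W) (x : B → ℝ) : rep cs u⁻¹ (rep cs u x) = x := by
  rw [← rep_mul, inv_mul_cancel, rep_one]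

lemma rep_simple_self (i : B) : rep cs (cs.simple i) (sroot i) = -sroot i := by
  rw [rep_simple, scoroot_sroot_self, two_smul]; abel

/-- The sequence `sin (n θ) / sin θ` with `c = cos θ`, given by its recursion. -/
noncomputable def sinQ (c : ℝ) : ℕ → ℝ
  | 0 => 0
  | 1 => 1
  | n + 2 => 2 * c * sinQ c (n + 1) - sinQ c n

lemma sinQ_mul_sin (θ : ℝ) (n : ℕ) :
    sinQ (cos θ) n * sin θ = sin (n * θ) ∧
      sinQ (cos θ) (n + 1) * sin θ = sin ((n + 1 : ℕ) * θ) := by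
  induction n with
  | zero => simp [sinQ]
  | succ n ih =>
    refine ⟨ih.2, ?_⟩
    have h : sin ((n + 1 + 1 : ℕ) * θ) = 2 * cos θ * sin ((n + 1 : ℕ) * θ) - sin (n * θ) := by
      have e1 : ((n + 1 + 1 : ℕ) : ℝ) * θ = (n + 1 : ℕ) * θ + θ := by push_cast; ring
      have e2 : (n : ℝ) * θ = (n + 1 : ℕ) * θ - θ := by push_cast; ring
      rw [e1, e2, sin_add, sin_sub]
      ring
    rw [h, ← ih.1, ← ih.2, sinQ]
    ring

lemma sinQ_one (n : ℕ) : sinQ 1 n = n ∧ sinQ 1 (n + 1) = n + 1 := by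
  induction n with
  | zero => simp [sinQ]
  | succ n ih =>
    refine ⟨by rw [ih.2]; push_cast; ring, ?_⟩
    rw [sinQ, ih.1, ih.2]
    push_cast
    ring

lemma sinQ_nonneg (m n : ℕ) (hm : m = 0 ∨ n ≤ m) (hm1 : m ≠ 1) : 0 ≤ sinQ (cos (π / m)) n := by
  rcases Nat.eq_zero_or_pos m with rfl | hpos
  · simp only [Nat.cast_zero, div_zero, cos_zero, (sinQ_one n).1]
    positivity
  have hn : n ≤ m := by omega
  have hm2 : (2 : ℝ) ≤ m := by exact_mod_cast (by omega : 2 ≤ m)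
  have hsin : 0 < sin (π / m) := by
    apply sin_pos_of_pos_of_lt_pi
    · positivity
    · rw [div_lt_iff₀ (by linarith)]
      nlinarith [pi_pos]
  have h := (sinQ_mul_sin (π / m) n).1
  have h2 : 0 ≤ sin (n * (π / m)) := by
    apply sin_nonneg_of_nonneg_of_le_pi
    · positivity
    · have : (n : ℝ) ≤ m := by exact_mod_cast hn
      rw [mul_div_assoc', div_le_iff₀ (by linarith)]
      nlinarith [pi_pos]
  by_contra! hneg
  nlinarith

/-- The action of the dihedral words on a simple root. -/
lemma rep_alternatingWord (s t : B) (n : ℕ) :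
    rep cs (cs.wordProd (CoxeterSystem.alternatingWord s t n)) (sroot s) =
      sinQ (cos (π / M s t)) (if Even n then n + 1 else n) • sroot s +
      sinQ (cos (π / M s t)) (if Even n then n else n + 1) • sroot t := by
  have hst : scoroot M s (sroot t) = -2 * cos (π / M s t) := by rw [scoroot_sroot, gram]; ring
  have hts : scoroot M t (sroot s) = -2 * cos (π / M s t) := by
    rw [scoroot_sroot, gram_symm, gram]; ring
  induction n with
  | zero => simp [CoxeterSystem.alternatingWord, sinQ]
  | succ n ih =>
    rw [CoxeterSystem.alternatingWord_succ', cs.wordProd_cons, rep_mul, ih]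
    by_cases hn : Even n
    · have hn1 : ¬ Even (n + 1) := by rw [Nat.even_add_one]; exact not_not.2 hn
      simp only [if_pos hn, if_neg hn1, rep_simple, map_add, map_smul, hts, scoroot_sroot_self,
        sinQ]
      module
    · have hn1 : Even (n + 1) := Nat.even_add_one.2 hn
      simp only [if_neg hn, if_pos hn1, rep_simple, map_add, map_smul, hst, scoroot_sroot_self,
        sinQ]
      module

/-- If `ℓ (w s_i) > ℓ w` then `w α_i` is a nonnegative combination of simple roots. -/
lemma rep_nonneg (w : W) (s : B) (hs : ¬ cs.IsRightDescent w s) : 0 ≤ rep cs w (sroot s) := by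
  classical
  induction hn : cs.length w using Nat.strong_induction_on generalizing w s with
  | _ n ih =>
    by_cases hw1 : w = 1
    · subst hw1; rw [rep_one]; exact sroot_nonneg s
    obtain ⟨t, ht⟩ := cs.exists_rightDescent_of_ne_one hw1
    have hts : s ≠ t := by rintro rfl; exact hs ht
    -- strip off the longest possible alternating suffix in `s` and `t`
    have hex : ∃ n v k, 1 ≤ k ∧ w = v * cs.wordProd (CoxeterSystem.alternatingWord s t k) ∧
        cs.length w = cs.length v + k ∧ cs.length v = n := by
      refine ⟨_, w * cs.simple t, 1, le_rfl, ?_, ?_, rfl⟩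
      · simp [CoxeterSystem.alternatingWord]
      · rw [cs.isRightDescent_iff] at ht; omega
    obtain ⟨v, k, hk, hwv, hlen, hvn⟩ := Nat.find_spec hex
    have hmin : ∀ v' k', 1 ≤ k' → w = v' * cs.wordProd (CoxeterSystem.alternatingWord s t k') →
        cs.length w = cs.length v' + k' → cs.length v ≤ cs.length v' := by
      intro v' k' h1 h2 h3
      rw [hvn]
      exact Nat.find_min' hex ⟨v', k', h1, h2, h3, rfl⟩
    have hx : ¬ cs.IsRightDescent v (if Even k then t else s) := by
      intro hd
      rw [cs.isRightDescent_iff] at hd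
      have := hmin (v * cs.simple (if Even k then t else s)) (k + 1) (by omega) ?_ (by omega)
      · omega
      · rw [CoxeterSystem.alternatingWord_succ', cs.wordProd_cons]
        simpa [mul_assoc] using hwv
    have hy : ¬ cs.IsRightDescent v (if Even k then s else t) := by
      intro hd
      rw [cs.isRightDescent_iff] at hd
      obtain ⟨k, rfl⟩ : ∃ k', k = k' + 1 := ⟨k - 1, by omega⟩
      have he : (if Even (k + 1) then s else t) = if Even k then t else s := by
        simp only [Nat.even_add_one]
        split_ifs <;> rfl
      rw [CoxeterSystem.alternatingWord_succ', cs.wordProd_cons, ← mul_assoc] at hwv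
      rw [he] at hd
      have h1 := cs.length_mul_le (v * cs.simple (if Even k then t else s))
        (cs.wordProd (CoxeterSystem.alternatingWord s t k))
      have h2 := cs.length_wordProd_le (CoxeterSystem.alternatingWord s t k)
      rw [CoxeterSystem.length_alternatingWord] at h2
      rw [← hwv] at h1
      omega
    have hvs : 0 ≤ rep cs v (sroot s) := by
      apply ih _ (by omega) v s _ rfl
      split_ifs at hx hy <;> assumption
    have hvt : 0 ≤ rep cs v (sroot t) := by
      apply ih _ (by omega) v t _ rfl
      split_ifs at hx hy <;> assumption
    have hM : M s t = 0 ∨ k + 1 ≤ M s t := by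
      by_contra! hcon
      have hnr := cs.not_isReduced_alternatingWord t s (m := k + 1)
        (by rw [M.symmetric]; exact hcon.1) (by rw [M.symmetric]; exact hcon.2)
      apply hnr
      rw [cs.not_isRightDescent_iff] at hs
      have h1 : w * cs.simple s = v * cs.wordProd (CoxeterSystem.alternatingWord t s (k + 1)) := by
        rw [CoxeterSystem.alternatingWord_succ, cs.wordProd_concat, ← mul_assoc, ← hwv]
      have h2 := cs.length_mul_le v (cs.wordProd (CoxeterSystem.alternatingWord t s (k + 1)))
      have h3 := cs.length_wordProd_le (CoxeterSystem.alternatingWord t s (k + 1))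
      rw [← h1] at h2
      rw [CoxeterSystem.length_alternatingWord] at h3
      rw [CoxeterSystem.IsReduced, CoxeterSystem.length_alternatingWord]
      omega
    have hm1 : M s t ≠ 1 := M.off_diagonal s t hts
    rw [hwv, rep_mul, rep_alternatingWord, map_add, map_smul, map_smul]
    refine add_nonneg (smul_nonneg (sinQ_nonneg _ _ ?_ hm1) hvs)
      (smul_nonneg (sinQ_nonneg _ _ ?_ hm1) hvt)
    · split_ifs <;> omega
    · split_ifs <;> omega

lemma rep_nonpos (w : W) (s : B) (hs : cs.IsRightDescent w s) : rep cs w (sroot s) ≤ 0 := by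
  have h := rep_nonneg cs (w * cs.simple s) s
    (cs.isRightDescent_iff_not_isRightDescent_mul.1 hs)
  rw [rep_mul, rep_simple_self, map_neg] at h
  exact neg_nonneg.1 h

/-- An element sending all simple roots to nonnegative vectors is trivial. -/
lemma eq_one_of_rep_nonneg (w : W) (h : ∀ i, 0 ≤ rep cs w (sroot i)) : w = 1 := by
  by_contra hw
  obtain ⟨i, hi⟩ := cs.exists_rightDescent_of_ne_one hw
  have h0 := le_antisymm (rep_nonpos cs w i hi) (h i)
  have h1 := rep_inv_rep cs w (sroot i)
  rw [h0, map_zero] at h1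
  exact sroot_ne_zero i h1.symm

end Geometric

/-! ### The invariant inner product and the unit roots -/

section Euclidean

variable [Fintype B]

/-- The sum of the coordinates. -/
def coordSum (B : Type*) [Fintype B] : (B → ℝ) →ₗ[ℝ] ℝ := ∑ j, LinearMap.proj j

lemma coordSum_apply (x : B → ℝ) : coordSum B x = ∑ j, x j := by simp [coordSum]

lemma coordSum_pos {x : B → ℝ} (hx : 0 ≤ x) (h0 : x ≠ 0) : 0 < coordSum B x := by
  obtain ⟨j, hj⟩ := Function.ne_iff.1 h0
  rw [coordSum_apply]
  exact Finset.sum_pos' (fun j _ => hx j) ⟨j, Finset.mem_univ _, lt_of_le_of_ne (hx j) (Ne.symm hj)⟩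

variable [DecidableEq B] (cs : CoxeterSystem M W)

lemma rep_injective {u v : W} (h : ∀ x, rep cs u x = rep cs v x) : u = v := by
  have h1 : u⁻¹ * v = 1 := by
    apply eq_one_of_rep_nonneg cs
    intro i
    rw [rep_mul, ← h, rep_inv_rep]
    exact sroot_nonneg i
  exact inv_mul_eq_one.1 h1

variable [Fintype W]

/-- The invariant inner product obtained by averaging the standard one over `W`. -/
noncomputable def ip : (B → ℝ) →ₗ[ℝ] (B → ℝ) →ₗ[ℝ] ℝ :=
  LinearMap.mk₂ ℝ (fun x y => ∑ w : W, ∑ j, rep cs w x j * rep cs w y j)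
    (fun x x' y => by simp [add_mul, Finset.sum_add_distrib])
    (fun c x y => by simp [Finset.mul_sum, mul_assoc])
    (fun x y y' => by simp [mul_add, Finset.sum_add_distrib])
    (fun c x y => by simp [Finset.mul_sum, mul_left_comm])

lemma ip_apply (x y : B → ℝ) : ip cs x y = ∑ w : W, ∑ j, rep cs w x j * rep cs w y j := rfl

lemma ip_symm (x y : B → ℝ) : ip cs x y = ip cs y x := by
  simp only [ip_apply, mul_comm]

lemma ip_pos (x : B → ℝ) (hx : x ≠ 0) : 0 < ip cs x x := by
  obtain ⟨j, hj⟩ := Function.ne_iff.1 hx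
  rw [ip_apply]
  refine Finset.sum_pos' (fun w _ => Finset.sum_nonneg fun j _ => mul_self_nonneg _)
    ⟨1, Finset.mem_univ _, ?_⟩
  refine Finset.sum_pos' (fun j _ => mul_self_nonneg _) ⟨j, Finset.mem_univ _, ?_⟩
  rw [rep_one]
  exact mul_self_pos.2 hj

lemma ip_rep (u : W) (x y : B → ℝ) : ip cs (rep cs u x) (rep cs u y) = ip cs x y := by
  simp only [ip_apply, ← rep_mul]
  exact Fintype.sum_equiv (Equiv.mulRight u) _ _ fun w => rfl

lemma ip_rep_left (u : W) (x y : B → ℝ) : ip cs (rep cs u x) y = ip cs x (rep cs u⁻¹ y) := by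
  rw [← ip_rep cs u x, ← rep_mul, mul_inv_cancel, rep_one]

lemma scoroot_mul_ip (i : B) (v : B → ℝ) :
    scoroot M i v * ip cs (sroot i) (sroot i) = 2 * ip cs v (sroot i) := by
  have h := ip_rep cs (cs.simple i) v (sroot i)
  rw [rep_simple_self, rep_simple] at h
  simp only [map_neg, map_sub, map_smul, LinearMap.sub_apply, LinearMap.smul_apply,
    smul_eq_mul] at h
  linarith

/-- Every functional is represented by the inner product. -/
lemma exists_ip_eq (f : (B → ℝ) →ₗ[ℝ] ℝ) : ∃ z, ∀ y, ip cs z y = f y := by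
  have hinj : Function.Injective (ip cs) := by
    rw [← LinearMap.ker_eq_bot, LinearMap.ker_eq_bot']
    intro x hx
    by_contra h0
    have := ip_pos cs x h0
    rw [hx] at this
    simp at this
  have hsurj := (LinearMap.injective_iff_surjective_of_finrank_eq_finrank
    (Subspace.dual_finrank_eq (K := ℝ) (V := B → ℝ)).symm).1 hinj
  obtain ⟨z, hz⟩ := hsurj f
  exact ⟨z, fun y => by rw [hz]⟩

lemma eq_zero_of_ip (z : B → ℝ) (h : ∀ y, ip cs z y = 0) : z = 0 := by
  by_contra h0
  exact (ip_pos cs z h0).ne' (h z)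

/-- The normalising factor of the simple root `α i`. -/
noncomputable def nrm (i : B) : ℝ := (Real.sqrt (ip cs (sroot i) (sroot i)))⁻¹

lemma nrm_pos (i : B) : 0 < nrm cs i :=
  inv_pos.2 (Real.sqrt_pos.2 (ip_pos cs _ (sroot_ne_zero i)))

/-- The unit simple root. -/
noncomputable def uroot (i : B) : B → ℝ := nrm cs i • sroot i

lemma nrm_sq (i : B) : nrm cs i * nrm cs i * ip cs (sroot i) (sroot i) = 1 := by
  have h := ip_pos cs _ (sroot_ne_zero i)
  have h2 := Real.mul_self_sqrt h.le
  have h3 := (Real.sqrt_pos.2 h).ne'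
  unfold nrm
  nth_rewrite 3 [← h2]
  field_simp

lemma ip_uroot (i : B) : ip cs (uroot cs i) (uroot cs i) = 1 := by
  rw [uroot]
  simp only [map_smul, LinearMap.smul_apply, smul_eq_mul]
  rw [← mul_assoc, nrm_sq]

lemma rep_simple' (i : B) (v : B → ℝ) :
    rep cs (cs.simple i) v = v - (2 * ip cs v (uroot cs i)) • uroot cs i := by
  have h1 := scoroot_mul_ip cs i v
  have h2 := nrm_sq cs i
  rw [rep_simple, uroot, map_smul, smul_eq_mul, smul_smul]
  congr 2
  linear_combination (-(scoroot M i v)) * h2 + (nrm cs i * nrm cs i) * h1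

lemma rep_simple_uroot (i : B) : rep cs (cs.simple i) (uroot cs i) = -uroot cs i := by
  rw [uroot, map_smul, rep_simple_self, smul_neg]

lemma uroot_nonneg (i : B) : 0 ≤ uroot cs i := smul_nonneg (nrm_pos cs i).le (sroot_nonneg i)

/-- The set of unit roots. -/
def roots : Set (B → ℝ) := Set.range fun p : W × B => rep cs p.1 (uroot cs p.2)

lemma mem_roots {x : B → ℝ} : x ∈ roots cs ↔ ∃ u i, rep cs u (uroot cs i) = x := by
  simp [roots]

lemma uroot_mem (i : B) : uroot cs i ∈ roots cs := (mem_roots cs).2 ⟨1, i, rep_one cs _⟩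

lemma rep_mem_roots (w : W) {x : B → ℝ} (hx : x ∈ roots cs) : rep cs w x ∈ roots cs := by
  obtain ⟨u, i, rfl⟩ := (mem_roots cs).1 hx
  exact (mem_roots cs).2 ⟨w * u, i, rep_mul cs _ _ _⟩

lemma neg_mem_roots {x : B → ℝ} (hx : x ∈ roots cs) : -x ∈ roots cs := by
  obtain ⟨u, i, rfl⟩ := (mem_roots cs).1 hx
  exact (mem_roots cs).2 ⟨u * cs.simple i, i, by rw [rep_mul, rep_simple_uroot, map_neg]⟩

lemma ip_roots {x : B → ℝ} (hx : x ∈ roots cs) : ip cs x x = 1 := by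
  obtain ⟨u, i, rfl⟩ := (mem_roots cs).1 hx
  rw [ip_rep, ip_uroot]

lemma roots_sign {x : B → ℝ} (hx : x ∈ roots cs) : 0 ≤ x ∨ x ≤ 0 := by
  obtain ⟨u, i, rfl⟩ := (mem_roots cs).1 hx
  rw [uroot, map_smul]
  by_cases h : cs.IsRightDescent u i
  · exact Or.inr (smul_nonpos_of_nonneg_of_nonpos (nrm_pos cs i).le (rep_nonpos cs u i h))
  · exact Or.inl (smul_nonneg (nrm_pos cs i).le (rep_nonneg cs u i h))

lemma roots_ne_zero {x : B → ℝ} (hx : x ∈ roots cs) : x ≠ 0 := by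
  rintro rfl
  simpa using ip_roots cs hx

lemma coordSum_ne {x : B → ℝ} (hx : x ∈ roots cs) : coordSum B x ≠ 0 := by
  rcases roots_sign cs hx with h | h
  · exact (coordSum_pos h (roots_ne_zero cs hx)).ne'
  · have := coordSum_pos (neg_nonneg.2 h) (neg_ne_zero.2 (roots_ne_zero cs hx))
    rw [map_neg] at this
    linarith

lemma nonneg_of_coordSum_pos {x : B → ℝ} (hx : x ∈ roots cs) (h : 0 < coordSum B x) : 0 ≤ x := by
  rcases roots_sign cs hx with h' | h'
  · exact h'
  · exfalso
    rw [coordSum_apply] at h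
    exact absurd (Finset.sum_nonpos fun j _ => h' j) (not_le.2 h)

lemma rep_conj_simple (u : W) (i : B) (v : B → ℝ) :
    rep cs (u * cs.simple i * u⁻¹) v =
      v - (2 * ip cs v (rep cs u (uroot cs i))) • rep cs u (uroot cs i) := by
  rw [rep_mul, rep_mul, rep_simple', map_sub, map_smul, ← rep_mul, mul_inv_cancel, rep_one,
    ip_rep_left, inv_inv]

open Classical in
/-- The reflection attached to a root. -/
noncomputable def reflOf (x : B → ℝ) : W :=
  if h : ∃ p : W × B, rep cs p.1 (uroot cs p.2) = x then
    h.choose.1 * cs.simple h.choose.2 * h.choose.1⁻¹ else 1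

lemma reflOf_spec {x : B → ℝ} (hx : x ∈ roots cs) :
    cs.IsReflection (reflOf cs x) ∧ ∀ v, rep cs (reflOf cs x) v = v - (2 * ip cs v x) • x := by
  have h : ∃ p : W × B, rep cs p.1 (uroot cs p.2) = x := hx
  rw [reflOf, dif_pos h]
  refine ⟨⟨_, _, rfl⟩, fun v => ?_⟩
  rw [rep_conj_simple, h.choose_spec]

/-- A vector pairing nonnegatively with simple roots pairs nonnegatively with nonnegative
vectors. -/
lemma ip_nonneg_of {μ x : B → ℝ} (hμ : ∀ i, 0 ≤ ip cs μ (sroot i)) (hx : 0 ≤ x) :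
    0 ≤ ip cs μ x := by
  have h : x = ∑ j, x j • sroot j := by
    ext k
    simp [sroot, Finset.sum_apply, Pi.single_apply]
  rw [h, map_sum]
  refine Finset.sum_nonneg fun j _ => ?_
  rw [map_smul]
  exact mul_nonneg (hx j) (hμ j)

/-- Every nontrivial element has a root in its moved space: otherwise it fixes a vector on no
reflecting hyperplane, and a conjugate fixes a vector in the open fundamental chamber. -/
lemma exists_root_in_mov {w : W} (hw : w ≠ 1) : ∃ x ∈ roots cs, ∃ z, z - rep cs w z = x := by
  by_contra! hcon
  let p : Submodule ℝ (B → ℝ) := LinearMap.ker (1 - rep cs w)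
  have hp : ∀ z, z ∈ p ↔ rep cs w z = z := by
    intro z
    simp only [p, LinearMap.mem_ker, LinearMap.sub_apply, Module.End.one_apply, sub_eq_zero]
    exact eq_comm
  have hfin : Finite (roots cs) := Set.finite_range _
  obtain ⟨z, hzp, hz⟩ := Module.Dual.exists_forall_mem_ne_zero_of_forall_exists p
    (fun x : roots cs => (ip cs).flip x) (by
      rintro ⟨x, hx⟩
      have hxr : x ∉ LinearMap.range (1 - rep cs w) := by
        rintro ⟨z, hz⟩
        exact hcon x hx z (by simpa using hz)
      obtain ⟨f, hfx, hf⟩ := Submodule.exists_le_ker_of_notMem hxr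
      obtain ⟨z, hz⟩ := exists_ip_eq cs f
      refine ⟨z, (hp z).2 ?_, ?_⟩
      · have h0 : z - rep cs w⁻¹ z = 0 := by
          apply eq_zero_of_ip cs
          intro y
          have h1 : f (y - rep cs w y) = 0 := hf ⟨y, by simp⟩
          rw [← hz, map_sub] at h1
          rw [map_sub, LinearMap.sub_apply, ip_rep_left, inv_inv]
          exact h1
        have h1 : rep cs w⁻¹ z = z := (sub_eq_zero.1 h0).symm
        conv_lhs => rw [← h1]
        rw [← rep_mul, mul_inv_cancel, rep_one]
      · rw [LinearMap.flip_apply, hz]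
        exact hfx)
  have hwz := (hp z).1 hzp
  obtain ⟨u, -, hu⟩ := Finset.exists_max_image (Finset.univ : Finset W)
    (fun u => coordSum B (rep cs u z)) ⟨1, Finset.mem_univ _⟩
  have hpos : ∀ i, 0 < ip cs (rep cs u z) (uroot cs i) := by
    intro i
    have h1 := hu (cs.simple i * u) (Finset.mem_univ _)
    rw [rep_mul, rep_simple', map_sub, map_smul, smul_eq_mul] at h1
    have h2 := coordSum_pos (uroot_nonneg cs i) (roots_ne_zero cs (uroot_mem cs i))
    have h3 : ip cs (rep cs u z) (uroot cs i) ≠ 0 := by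
      rw [ip_rep_left]
      exact hz ⟨_, rep_mem_roots cs u⁻¹ (uroot_mem cs i)⟩
    refine lt_of_le_of_ne ?_ h3.symm
    by_contra! h4
    nlinarith
  have hpos' : ∀ i, 0 ≤ ip cs (rep cs u z) (sroot i) := by
    intro i
    have h1 := hpos i
    rw [uroot, map_smul, smul_eq_mul] at h1
    exact (pos_of_mul_pos_right h1 (nrm_pos cs i).le).le
  have hg : u * w * u⁻¹ = 1 := by
    apply eq_one_of_rep_nonneg cs
    intro i
    have h1 : 0 < ip cs (rep cs u z) (rep cs (u * w * u⁻¹) (uroot cs i)) := by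
      have h2 : rep cs u z = rep cs (u * w * u⁻¹) (rep cs u z) := by
        rw [rep_mul, rep_mul, rep_inv_rep, hwz]
      rw [h2, ip_rep]
      exact hpos i
    rcases roots_sign cs (rep_mem_roots cs (u * w * u⁻¹) (uroot_mem cs i)) with h | h
    · rw [uroot, map_smul] at h
      intro j
      exact nonneg_of_mul_nonneg_right (h j) (nrm_pos cs i)
    · exfalso
      have h3 := ip_nonneg_of cs hpos' (neg_nonneg.2 h)
      rw [map_neg] at h3
      linarith
  apply hw
  have : w = u⁻¹ * (u * w * u⁻¹) * u := by group
  rw [this, hg]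
  simp

/-- The geometric representation of a finite Coxeter group as an orthogonal reflection
representation. -/
noncomputable def geom : ReflRep cs (B → ℝ) where
  act := rep cs
  Q := ip cs
  Q_symm := ip_symm cs
  Q_pos := ip_pos cs
  Q_act := ip_rep cs
  Φ := roots cs
  finite_Φ := Set.finite_range _
  ht := coordSum B
  ht_ne _ hx := coordSum_ne cs hx
  Q_self _ hx := ip_roots cs hx
  act_mem w _ hx := rep_mem_roots cs w hx
  neg_mem _ hx := neg_mem_roots cs hx
  refl := reflOf cs
  refl_isReflection _ hx := (reflOf_spec cs hx).1
  refl_act _ hx := (reflOf_spec cs hx).2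
  exists_root := by
    rintro t ⟨u, i, rfl⟩
    have hx : rep cs u (uroot cs i) ∈ roots cs := rep_mem_roots cs u (uroot_mem cs i)
    refine ⟨_, hx, rep_injective cs fun v => ?_⟩
    rw [(reflOf_spec cs hx).2, rep_conj_simple]
  exists_root_mem _ hw := exists_root_in_mov cs hw

end Euclidean

/-! ### The order of the positive roots given by a Coxeter element -/

section Coxeter

variable [Fintype B] [DecidableEq B] (cs : CoxeterSystem M W)

lemma rep_simple_apply_of_ne {i j : B} (h : j ≠ i) (y : B → ℝ) :
    rep cs (cs.simple i) y j = y j := by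
  rw [rep_simple]
  simp [sroot, h]

lemma rep_wordProd_apply_of_notMem {l : List B} {j : B} (h : j ∉ l) (y : B → ℝ) :
    rep cs (cs.wordProd l) y j = y j := by
  induction l with
  | nil => simp
  | cons a l ih =>
    have hne : j ≠ a := fun h' => h (h' ▸ List.mem_cons_self)
    rw [cs.wordProd_cons, rep_mul, rep_simple_apply_of_ne cs hne,
      ih fun h' => h (List.mem_cons_of_mem _ h')]

variable [Fintype W]

/-- A simple reflection makes only its own simple root negative. -/
lemma eq_uroot {y : B → ℝ} (hy : y ∈ roots cs) (h0 : 0 ≤ y) {i : B}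
    (hn : ¬ 0 ≤ rep cs (cs.simple i) y) : y = uroot cs i := by
  have hneg := (roots_sign cs (rep_mem_roots cs (cs.simple i) hy)).resolve_left hn
  have hc : y = (y i / nrm cs i) • uroot cs i := by
    rw [uroot, smul_smul, div_mul_cancel₀ _ (nrm_pos cs i).ne']
    ext j
    by_cases hj : j = i
    · subst hj
      simp [sroot]
    · have h1 := hneg j
      rw [rep_simple_apply_of_ne cs hj] at h1
      simpa [sroot, hj] using le_antisymm h1 (h0 j)
  have hc0 : 0 ≤ y i / nrm cs i := div_nonneg (h0 i) (nrm_pos cs i).le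
  have h1 := ip_roots cs hy
  rw [hc] at h1
  simp only [map_smul, LinearMap.smul_apply, smul_eq_mul, ip_uroot, mul_one] at h1
  have h2 : y i / nrm cs i = 1 := by nlinarith
  rw [h2, one_smul] at hc
  exact hc

/-- The positive roots made negative by the inverse of `s₁ ⋯ sₙ` are among
`s₁ ⋯ sₖ₋₁ εₖ`. -/
lemma exists_inversion (l : List B) {y : B → ℝ} (hy : y ∈ roots cs) (h0 : 0 ≤ y)
    (hn : ¬ 0 ≤ rep cs (cs.wordProd l)⁻¹ y) :
    ∃ l₁ i l₂, l = l₁ ++ i :: l₂ ∧ y = rep cs (cs.wordProd l₁) (uroot cs i) := by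
  induction l generalizing y with
  | nil => exact absurd (by simpa using h0) hn
  | cons a l ih =>
    by_cases h : 0 ≤ rep cs (cs.simple a) y
    · rw [cs.wordProd_cons, mul_inv_rev, rep_mul, cs.inv_simple] at hn
      obtain ⟨l₁, i, l₂, rfl, h2⟩ := ih (rep_mem_roots cs _ hy) h hn
      refine ⟨a :: l₁, i, l₂, rfl, ?_⟩
      rw [cs.wordProd_cons, rep_mul, ← h2, ← rep_mul, cs.simple_mul_simple_self, rep_one]
    · exact ⟨[], a, l, rfl, by simpa using eq_uroot cs hy h0 h⟩

/-- The fundamental weight `ω i` satisfies `ω - γ ω = s₁ ⋯ sₖ₋₁ εₖ`, where `i` is the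
`k`-th letter of the word of `γ`. -/
lemma exists_weight (i : B) : ∃ ω, (∀ y, ip cs ω y = y i / (2 * nrm cs i)) ∧
    ∀ l₁ l₂ : List B, (l₁ ++ i :: l₂).Nodup →
      ω - rep cs (cs.wordProd (l₁ ++ i :: l₂)) ω = rep cs (cs.wordProd l₁) (uroot cs i) := by
  obtain ⟨ω, hω⟩ := exists_ip_eq cs ((2 * nrm cs i)⁻¹ • LinearMap.proj i)
  have hω' : ∀ y, ip cs ω y = y i / (2 * nrm cs i) := by
    intro y
    rw [hω, LinearMap.smul_apply, LinearMap.proj_apply, smul_eq_mul, div_eq_inv_mul]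
  have hfix : ∀ l : List B, i ∉ l → rep cs (cs.wordProd l) ω = ω := by
    intro l hl
    induction l with
    | nil => simp
    | cons a l ih =>
      have hne : i ≠ a := fun h' => hl (h' ▸ List.mem_cons_self)
      rw [cs.wordProd_cons, rep_mul, ih fun h' => hl (List.mem_cons_of_mem _ h'), rep_simple',
        hω']
      simp [uroot, sroot, hne]
  have hself : rep cs (cs.simple i) ω = ω - uroot cs i := by
    rw [rep_simple', hω']
    have h := (nrm_pos cs i).ne'
    have h1 : 2 * (uroot cs i i / (2 * nrm cs i)) = 1 := by
      simp only [uroot, sroot, Pi.smul_apply, Pi.single_eq_same, smul_eq_mul, mul_one]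
      field_simp
    rw [h1, one_smul]
  refine ⟨ω, hω', fun l₁ l₂ hl => ?_⟩
  have h1 := List.nodup_append.1 hl
  have hi₂ : i ∉ l₂ := (List.nodup_cons.1 h1.2.1).1
  have hi₁ : i ∉ l₁ := fun h => h1.2.2 i h i List.mem_cons_self rfl
  rw [cs.wordProd_append, cs.wordProd_cons, rep_mul, rep_mul, hfix l₂ hi₂, hself, map_sub,
    hfix l₁ hi₁, sub_sub_cancel]

lemma ip_uroot_eq_zero (z : B → ℝ) (l : List B)
    (h : ∀ l₁ i l₂, l = l₁ ++ i :: l₂ → ip cs z (rep cs (cs.wordProd l₁) (uroot cs i)) = 0) :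
    ∀ i ∈ l, ip cs z (uroot cs i) = 0 := by
  induction l with
  | nil => simp
  | cons a l ih =>
    have ha : ip cs z (uroot cs a) = 0 := by simpa using h [] a l rfl
    have hz : rep cs (cs.simple a) z = z := by rw [rep_simple', ha]; simp
    intro i hi
    rcases List.mem_cons.1 hi with rfl | hi
    · exact ha
    · refine ih (fun l₁ j l₂ hl => ?_) i hi
      have h1 := h (a :: l₁) j l₂ (by rw [hl]; rfl)
      rw [cs.wordProd_cons, rep_mul] at h1
      conv_lhs at h1 => rw [← hz]
      rwa [ip_rep] at h1

/-- A Coxeter element fixes no nonzero vector. -/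
lemma eq_zero_of_fixed {l : List B} (hl : l.Nodup) (hmem : ∀ i, i ∈ l) {z : B → ℝ}
    (hz : rep cs (cs.wordProd l) z = z) : z = 0 := by
  have h1 := ip_uroot_eq_zero cs z l (by
    rintro l₁ i l₂ rfl
    obtain ⟨ω, -, hω⟩ := exists_weight cs i
    rw [← hω l₁ l₂ hl, map_sub]
    conv_lhs => enter [2, 1]; rw [← hz]
    rw [ip_rep, sub_self])
  apply eq_zero_of_ip cs
  have h2 : ∀ i, ip cs z (sroot i) = 0 := by
    intro i
    have h3 := h1 i (hmem i)
    rw [uroot, map_smul, smul_eq_mul] at h3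
    exact (mul_eq_zero.1 h3).resolve_left (nrm_pos cs i).ne'
  have h4 : ip cs z = 0 := by
    refine (Pi.basisFun ℝ B).ext fun i => ?_
    rw [Pi.basisFun_apply]
    exact h2 i
  intro y
  rw [h4]
  rfl

/-- Moving a positive root along its `γ`-orbit until it is about to become negative leads to an
inversion of `γ⁻¹`. -/
lemma exists_orbit {l : List B} (hl : l.Nodup) (hmem : ∀ i, i ∈ l) {x : B → ℝ}
    (hx : x ∈ roots cs) (h0 : 0 ≤ x) : ∃ p : ℕ × List B, ∃ i l₂, l = p.2 ++ i :: l₂ ∧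
      (∀ m ≤ p.1, 0 ≤ rep cs (cs.wordProd l ^ m)⁻¹ x) ∧
      rep cs (cs.wordProd l ^ p.1)⁻¹ x = rep cs (cs.wordProd p.2) (uroot cs i) := by
  classical
  set γ := cs.wordProd l with hγ
  have hstep : ∀ m, rep cs (γ ^ (m + 1))⁻¹ x = rep cs γ⁻¹ (rep cs (γ ^ m)⁻¹ x) := by
    intro m
    rw [← rep_mul, pow_succ, mul_inv_rev]
  have hex : ∃ k, ¬ 0 ≤ rep cs (γ ^ k)⁻¹ x := by
    by_contra! hall
    -- The sum over the orbit is fixed by `γ`, hence zero, although its height is positive.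
    set S := ∑ m ∈ Finset.range (orderOf γ), rep cs (γ ^ m)⁻¹ x with hS
    have hSfix : rep cs γ⁻¹ S = S := by
      rw [hS, map_sum]
      simp only [← hstep]
      have h1 := Finset.sum_range_succ (fun m => rep cs (γ ^ m)⁻¹ x) (orderOf γ)
      rw [Finset.sum_range_succ', pow_orderOf_eq_one, pow_zero] at h1
      exact add_right_cancel h1
    have hS0 : S = 0 := by
      apply eq_zero_of_fixed cs hl hmem
      rw [← hγ]
      conv_lhs => rw [← hSfix]
      rw [← rep_mul, mul_inv_cancel, rep_one]
    have hpos : 0 < coordSum B S := by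
      rw [hS, map_sum]
      exact Finset.sum_pos
        (fun m _ => coordSum_pos (hall m) (roots_ne_zero cs (rep_mem_roots cs _ hx)))
        ⟨0, Finset.mem_range.2 (orderOf_pos γ)⟩
    rw [hS0, map_zero] at hpos
    exact lt_irrefl _ hpos
  obtain ⟨k, hk⟩ : ∃ k, Nat.find hex = k + 1 := by
    refine Nat.exists_eq_succ_of_ne_zero fun h => ?_
    have h1 := Nat.find_spec hex
    rw [h] at h1
    exact h1 (by simpa using h0)
  have hle : ∀ m ≤ k, 0 ≤ rep cs (γ ^ m)⁻¹ x := by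
    intro m hm
    by_contra h
    have := Nat.find_min' hex h
    omega
  have hn := Nat.find_spec hex
  rw [hk, hstep] at hn
  obtain ⟨l₁, i, l₂, h1, h2⟩ := exists_inversion cs l (rep_mem_roots cs _ hx) (hle k le_rfl) hn
  exact ⟨(k, l₁), i, l₂, h1, hle, h2⟩

/-- The positive roots are ordered by the time their backward `γ`-orbit stays positive, then by
the position of the inversion of `γ⁻¹` reached. -/
theorem exists_coxData {l : List B} (hl : l.Nodup) (hmem : ∀ i, i ∈ l) :
    Nonempty (CoxData (geom cs) (cs.wordProd l)) := by
  classical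
  set γ := cs.wordProd l with hγ
  have hker : Function.Injective (1 - rep cs γ : Module.End ℝ (B → ℝ)) := by
    rw [← LinearMap.ker_eq_bot, LinearMap.ker_eq_bot']
    intro z hz
    refine eq_zero_of_fixed cs hl hmem ?_
    rw [LinearMap.sub_apply, Module.End.one_apply, sub_eq_zero] at hz
    exact hz.symm
  let T := LinearEquiv.ofInjectiveEndo (1 - rep cs γ) hker
  have hT : ∀ z, T z = z - rep cs γ z := fun z => rfl
  let E : (B → ℝ) →ₗ[ℝ] (B → ℝ) →ₗ[ℝ] ℝ := ip cs ∘ₗ T.symm.toLinearMap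
  have hE : ∀ z y, E (z - rep cs γ z) y = ip cs z y := by
    intro z y
    rw [← hT]
    simp [E]
  have hsurj : ∀ x, ∃ z, z - rep cs γ z = x := fun x => T.surjective x
  have hinv : ∀ (k : ℕ) a b, E (rep cs (γ ^ k)⁻¹ a) (rep cs (γ ^ k)⁻¹ b) = E a b := by
    intro k a b
    obtain ⟨z, rfl⟩ := hsurj a
    have hcomm : (γ ^ k)⁻¹ * γ = γ * (γ ^ k)⁻¹ :=
      ((Commute.refl γ).pow_left k).inv_left
    rw [map_sub, ← rep_mul, hcomm, rep_mul, hE, hE, ip_rep]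
  have hserre : ∀ a b, E (rep cs γ a) b = -E b a := by
    intro a b
    obtain ⟨z, rfl⟩ := hsurj a
    obtain ⟨y, rfl⟩ := hsurj b
    rw [map_sub (rep cs γ), hE, hE]
    have h1 := ip_rep cs γ z y
    have h2 := ip_symm cs z y
    have h3 := ip_symm cs y (rep cs γ z)
    simp only [map_sub]
    linarith
  have hEπ : ∀ l₁ i l₂, l = l₁ ++ i :: l₂ → ∀ y,
      E (rep cs (cs.wordProd l₁) (uroot cs i)) y = y i / (2 * nrm cs i) := by
    intro l₁ i l₂ h y
    obtain ⟨ω, hω, hω'⟩ := exists_weight cs i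
    rw [← hω' l₁ l₂ (h ▸ hl), ← h, hE, hω]
  have hEπ0 : ∀ l₁ i l₂, l = l₁ ++ i :: l₂ → ∀ y, 0 ≤ y →
      0 ≤ E (rep cs (cs.wordProd l₁) (uroot cs i)) y := by
    intro l₁ i l₂ h y hy
    rw [hEπ l₁ i l₂ h]
    exact div_nonneg (hy i) (mul_pos two_pos (nrm_pos cs i)).le
  have horb : ∀ x, ∃ p : ℕ × List B, (geom cs).Pos x → ∃ i l₂, l = p.2 ++ i :: l₂ ∧
      (∀ m ≤ p.1, 0 ≤ rep cs (γ ^ m)⁻¹ x) ∧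
      rep cs (γ ^ p.1)⁻¹ x = rep cs (cs.wordProd p.2) (uroot cs i) := by
    intro x
    by_cases hx : (geom cs).Pos x
    · obtain ⟨p, h⟩ := exists_orbit cs hl hmem hx.1 (nonneg_of_coordSum_pos cs hx.1 hx.2)
      exact ⟨p, fun _ => h⟩
    · exact ⟨(0, []), fun h => absurd h hx⟩
  choose p hp using horb
  have hlen : ∀ x, (geom cs).Pos x → (p x).2.length < l.length := by
    intro x hx
    obtain ⟨i, l₂, h, -⟩ := hp x hx
    have h1 := congrArg List.length h
    rw [List.length_append, List.length_cons] at h1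
    omega
  have hlex : ∀ x y, (geom cs).Pos x → (geom cs).Pos y →
      (p x).1 * l.length + (p x).2.length < (p y).1 * l.length + (p y).2.length →
      (p x).1 < (p y).1 ∨ (p x).1 = (p y).1 ∧ (p x).2.length < (p y).2.length := by
    intro x y hx hy h
    have h2 := hlen y hy
    rcases lt_trichotomy (p x).1 (p y).1 with h3 | h3 | h3
    · exact Or.inl h3
    · rw [h3] at h
      exact Or.inr ⟨h3, by omega⟩
    · exfalso
      have h4 := Nat.mul_le_mul_right l.length (Nat.succ_le_of_lt h3)
      rw [Nat.succ_mul] at h4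
      omega
  refine ⟨{
    E := E
    E_sub := hE
    mem_mov := fun x => (geom cs).mem_mov.2 (hsurj x)
    key := fun x => (p x).1 * l.length + (p x).2.length
    key_inj := ?_
    E_nonneg_of_lt := ?_
    E_nonpos_of_lt := ?_ }⟩
  · intro x y hx hy hxy
    have h1 := hlen x hx
    have h2 := hlen y hy
    have hk : (p x).1 = (p y).1 := by
      rcases lt_trichotomy (p x).1 (p y).1 with h3 | h3 | h3
      · have h4 := Nat.mul_le_mul_right l.length (Nat.succ_le_of_lt h3)
        rw [Nat.succ_mul] at h4
        omega
      · exact h3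
      · have h4 := Nat.mul_le_mul_right l.length (Nat.succ_le_of_lt h3)
        rw [Nat.succ_mul] at h4
        omega
    have hn : (p x).2.length = (p y).2.length := by
      rw [hk] at hxy
      omega
    obtain ⟨i, l₂, hi, -, hxi⟩ := hp x hx
    obtain ⟨j, m₂, hj, -, hyj⟩ := hp y hy
    obtain ⟨h5, h6⟩ := List.append_inj (hi.symm.trans hj) hn
    obtain ⟨rfl, -⟩ := List.cons_eq_cons.1 h6
    rw [h5, ← hyj, hk] at hxi
    have h7 := congrArg (rep cs (γ ^ (p y).1)) hxi
    simpa only [← rep_mul, mul_inv_cancel, rep_one] using h7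
  · intro x y hx hy hxy
    obtain ⟨i, l₂, hi, -, hxi⟩ := hp x hx
    obtain ⟨j, m₂, hj, hpos, hyj⟩ := hp y hy
    rw [← hinv (p x).1, hxi]
    refine hEπ0 _ _ _ hi _ (hpos _ ?_)
    rcases hlex x y hx hy hxy with h | h <;> omega
  · intro x y hx hy hxy
    obtain ⟨i, l₂, hi, -, hxi⟩ := hp x hx
    obtain ⟨j, m₂, hj, hpos, hyj⟩ := hp y hy
    rcases hlex x y hx hy hxy with h | ⟨h, h'⟩
    · have h1 : rep cs (γ ^ (p x).1)⁻¹ y = rep cs γ (rep cs (γ ^ ((p x).1 + 1))⁻¹ y) := by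
        rw [← rep_mul, pow_succ, mul_inv_rev, mul_inv_cancel_left]
      rw [← hinv (p x).1, h1, hserre, hxi]
      exact neg_nonpos.2 (hEπ0 _ _ _ hi _ (hpos _ h))
    · rw [← hinv (p x).1, hxi, h, hyj, hEπ _ _ _ hj]
      have hpre : ∃ t, (p y).2 = (p x).2 ++ i :: t := by
        rcases List.append_eq_append_iff.1 (hi.symm.trans hj) with ⟨t, h1, h2⟩ | ⟨t, h1, h2⟩
        · cases t with
          | nil =>
            rw [h1, List.append_nil] at h'
            exact absurd h' (lt_irrefl _)
          | cons b t =>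
            obtain ⟨rfl, -⟩ := List.cons_eq_cons.1 h2
            exact ⟨t, h1⟩
        · rw [h1, List.length_append] at h'
          omega
      obtain ⟨t, ht⟩ := hpre
      have hjp : j ∉ (p y).2 := by
        rw [hj] at hl
        exact fun h => (List.nodup_append.1 hl).2.2 j h j List.mem_cons_self rfl
      rw [ht, List.mem_append, List.mem_cons] at hjp
      push Not at hjp
      rw [rep_wordProd_apply_of_notMem cs hjp.1]
      simp [uroot, sroot, hjp.2.1]

end Coxeter

end BradyWatt

open BradyWatt in
/-- Brady–Watt: for a finite Coxeter group `W` with the reflection order and a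
Coxeter element `γ`, the interval `[1,γ]` is a lattice: every pair of elements has a
meet and a join within the interval. -/
theorem interval_isLattice [Fintype B] [Fintype W] (cs : CoxeterSystem M W) (γ : W)
    (hγ : IsCoxeterElement cs γ) (u w : W) (hu : rle cs u γ) (hw : rle cs w γ) :
    (∃ m : W, IsIntervalGLB cs γ {u, w} m) ∧ (∃ j : W, IsIntervalLUB cs γ {u, w} j) := by
  classical
  obtain ⟨v, l, hl, hmem, rfl⟩ := hγ
  obtain ⟨C⟩ := exists_coxData cs hl hmem
  -- Conjugation by `v` preserves the order and carries `[1, wordProd l]` to `[1, γ]`.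
  have key : ∀ x y, rle cs (v⁻¹ * x * v) (v⁻¹ * y * v) ↔ rle cs x y := by
    intro x y
    simpa using rle_conj cs v⁻¹ x y
  have hγ' : cs.wordProd l = v⁻¹ * (v * cs.wordProd l * v⁻¹) * v := by group
  have hx : ∀ x, v⁻¹ * (v * x * v⁻¹) * v = x := by
    intro x
    group
  have hu' : rle cs (v⁻¹ * u * v) (cs.wordProd l) := by rw [hγ']; exact (key _ _).2 hu
  have hw' : rle cs (v⁻¹ * w * v) (cs.wordProd l) := by rw [hγ']; exact (key _ _).2 hw
  constructor
  · obtain ⟨m, hm, hlow, hgreat⟩ := C.exists_isIntervalGLB hu' hw'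
    refine ⟨v * m * v⁻¹, (rle_conj cs v _ _).2 hm, ?_, ?_⟩
    · rintro x (rfl | rfl) <;> rw [← key, hx] <;> exact hlow _ (by simp)
    · intro r hr hrl
      rw [← key, hx]
      refine hgreat _ (by rw [hγ']; exact (key _ _).2 hr) ?_
      rintro x (rfl | rfl) <;> exact (key _ _).2 (hrl _ (by simp))
  · obtain ⟨j, hj, hup, hleast⟩ := C.exists_isIntervalLUB hu' hw'
    refine ⟨v * j * v⁻¹, (rle_conj cs v _ _).2 hj, ?_, ?_⟩
    · rintro x (rfl | rfl) <;> rw [← key, hx] <;> exact hup _ (by simp)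
    · intro r hr hrl
      rw [← key, hx]
      refine hleast _ (by rw [hγ']; exact (key _ _).2 hr) ?_
      rintro x (rfl | rfl) <;> exact (key _ _).2 (hrl _ (by simp))
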